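/- Let (A, m) be a noetherian local ring with infinite residue field, M a finitely generated A-module of Krull dimension d > 0, J an m-primary ideal, and I_1, ..., I_s ideals of A. Set I = I_1···I_s. Assume ht((I + Ann_A M)/Ann_A M) = h > 0 and that k_0, k_1, ..., k_s are non-negative integers with k_0 + k_1 + ··· + k_s = d − 1 and k_1 + ··· + k_s < h. Let R = {x_1, ..., x_d} be a joint reduction of (I_1, ..., I_s, J) with respect to M of the type (k_1, ..., k_s, k_0+1) such that R is a system of parameters for M. Then e_A(J^{[k_0+1]}, I_1^{[k_1]}, ..., I_s^{[k_s]}, M) = e_A(R, M), i.e., the mixed multiplicity of type (k_1, ..., k_s, k_0+1) equals the Hilbert–Samuel multiplicity of the parameter ideal (x_1, ..., x_d) on M. -/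

import Mathlib

open IsLocalRing

section MixedMultDefs

variable (A : Type*) [CommRing A]

/-- The length of an `A`-module `M`, defined as the height of `⊤` in the lattice of
submodules of `M` (i.e. the supremum of lengths of chains of submodules). -/
noncomputable def modLength (M : Type*) [AddCommGroup M] [Module A M] : ℕ∞ :=
  Order.height (⊤ : Submodule A M)

/-- The length of a module as a natural number (`0` if the length is infinite). -/
noncomputable def lenNat (M : Type*) [AddCommGroup M] [Module A M] : ℕ :=
  (modLength A M).toNat

/-- The height of an ideal: the infimum of the heights of the prime ideals containing it. -/
noncomputable def idealHeight (I : Ideal A) : ℕ∞ :=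
  ⨅ (p : PrimeSpectrum A) (_ : I ≤ p.asIdeal), Order.height p

/-- The Krull dimension of a module `M`, i.e. the Krull dimension of `A / Ann_A M`. -/
noncomputable def modDim (M : Type*) [AddCommGroup M] [Module A M] : WithBot ℕ∞ :=
  ringKrullDim (A ⧸ Module.annihilator A M)

/-- `x` is a Rees superficial element of the family of ideals `I = (I 0, …, I (t-1))` with
respect to `M`, as an element of the ideal `I i`:  `x ∈ I i` and
`xM ∩ I_1^{n_1} ⋯ I_i^{n_i + 1} ⋯ I_t^{n_t} M = x I_1^{n_1} ⋯ I_i^{n_i} ⋯ I_t^{n_t} M`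
for all sufficiently large `n i` and arbitrary other exponents. -/
def IsReesSuperficial (M : Type*) [AddCommGroup M] [Module A M] {t : ℕ}
    (I : Fin t → Ideal A) (i : Fin t) (x : A) : Prop :=
  x ∈ I i ∧ ∃ N : ℕ, ∀ n : Fin t → ℕ, N ≤ n i →
    (Ideal.span {x} • (⊤ : Submodule A M)) ⊓
        ((∏ j, I j ^ (n j + if j = i then 1 else 0)) • (⊤ : Submodule A M)) =
      Ideal.span {x} • ((∏ j, I j ^ (n j)) • (⊤ : Submodule A M))

/-- `x 0, …, x (t-1)` is a Rees superficial sequence of the family `I` with respect to `M`,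
where the assignment `c` records to which ideal each element of the sequence belongs:
`x i` is a Rees superficial element of `I`, as an element of `I (c i)`, with respect to
`M / (x 0, …, x (i-1)) M`. -/
def IsReesSuperficialSeq (M : Type*) [AddCommGroup M] [Module A M] {t s : ℕ}
    (I : Fin s → Ideal A) (x : Fin t → A) (c : Fin t → Fin s) : Prop :=
  ∀ i : Fin t,
    IsReesSuperficial A
      (M ⧸ ((Ideal.span (x '' {j | (j : ℕ) < (i : ℕ)})) • (⊤ : Submodule A M)))
      I (c i) (x i)

/-- The assignment `c` has type `(k 0, …, k (s-1))`: for each `i`, exactly `k i` members of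
the sequence are assigned to the ideal indexed by `i`. -/
def OfTypeCount {t s : ℕ} (c : Fin t → Fin s) (k : Fin s → ℕ) : Prop :=
  ∀ i : Fin s, (Finset.univ.filter fun j => c j = i).card = k i

/-- The ideal generated by the members of the sequence `x` assigned (by `c`) to index `i`. -/
def jrIdeal {t s : ℕ} (x : Fin t → A) (c : Fin t → Fin s) (i : Fin s) : Ideal A :=
  Ideal.span (x '' {j | c j = i})

/-- The defining equation of a joint reduction:  all members of the sequence lie in their
assigned ideals, and `I_1^{n_1+1} ⋯ I_s^{n_s+1} M = Σ_i (𝔍_i) I_1^{n_1+1} ⋯ I_i^{n_i} ⋯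
I_s^{n_s+1} M` for all sufficiently large `n_1, …, n_s`, where `𝔍_i` consists of the
members of the sequence assigned to `I i`. -/
def IsJointReductionEq (M : Type*) [AddCommGroup M] [Module A M] {t s : ℕ}
    (I : Fin s → Ideal A) (x : Fin t → A) (c : Fin t → Fin s) : Prop :=
  (∀ j, x j ∈ I (c j)) ∧
  ∃ N : ℕ, ∀ n : Fin s → ℕ, (∀ i, N ≤ n i) →
    ((∏ i, I i ^ (n i + 1)) • (⊤ : Submodule A M)) =
      ∑ i : Fin s, jrIdeal A x c i •
        ((∏ j, I j ^ (n j + if j = i then 0 else 1)) • (⊤ : Submodule A M))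

/-- A joint reduction of the family `I` with respect to `M` of type `k`. -/
def IsJointReduction (M : Type*) [AddCommGroup M] [Module A M] {t s : ℕ}
    (I : Fin s → Ideal A) (x : Fin t → A) (c : Fin t → Fin s) (k : Fin s → ℕ) : Prop :=
  IsJointReductionEq A M I x c ∧ OfTypeCount c k

/-- `x 1, …, x d` is a system of parameters for `M`:  `d = dim M`, the `x j` lie in the
maximal ideal, and `M / (x 1, …, x d) M` has finite length. -/
def IsSOP [IsLocalRing A] (M : Type*) [AddCommGroup M] [Module A M] {d : ℕ}
    (x : Fin d → A) : Prop :=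
  modDim A M = (d : ℕ∞) ∧ (∀ j, x j ∈ maximalIdeal A) ∧
    IsFiniteLength A (M ⧸ ((Ideal.span (Set.range x)) • (⊤ : Submodule A M)))

/-- `e` is the Hilbert–Samuel multiplicity of the ideal `q` on the `d`-dimensional module
`M`: the function `n ↦ ℓ_A(M / q^n M)` is eventually given by a polynomial of degree at
most `d` with `n^d`-coefficient `e / d!`. -/
def IsHSMult (M : Type*) [AddCommGroup M] [Module A M] (q : Ideal A) (d : ℕ) (e : ℕ) :
    Prop :=
  ∃ P : Polynomial ℚ, P.natDegree ≤ d ∧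
    (∃ N : ℕ, ∀ n : ℕ, N ≤ n →
      IsFiniteLength A (M ⧸ (q ^ n • (⊤ : Submodule A M))) ∧
      (lenNat A (M ⧸ (q ^ n • (⊤ : Submodule A M))) : ℚ) = P.eval (n : ℚ)) ∧
    (e : ℚ) = P.coeff d * (Nat.factorial d : ℚ)

/-- The subquotient `J^{n_0} I_1^{n_1} ⋯ I_s^{n_s} M / J^{n_0+1} I_1^{n_1} ⋯ I_s^{n_s} M`. -/
abbrev mixedSub (M : Type*) [AddCommGroup M] [Module A M] {s : ℕ} (J : Ideal A)
    (I : Fin s → Ideal A) (n : Fin (s + 1) → ℕ) : Submodule A M :=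
  (J ^ (n 0) * ∏ i : Fin s, I i ^ (n i.succ)) • (⊤ : Submodule A M)

/-- continued -/
abbrev mixedPiece (M : Type*) [AddCommGroup M] [Module A M] {s : ℕ} (J : Ideal A)
    (I : Fin s → Ideal A) (n : Fin (s + 1) → ℕ) :=
  ↥(mixedSub A M J I n) ⧸
    (Submodule.comap (mixedSub A M J I n).subtype
      ((J ^ (n 0 + 1) * ∏ i : Fin s, I i ^ (n i.succ)) • (⊤ : Submodule A M)))

/-- `e` is the mixed multiplicity `e_A(J^{[k_0+1]}, I_1^{[k_1]}, …, I_s^{[k_s]}; M)`: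
the function `(n_0, …, n_s) ↦ ℓ_A(J^{n_0} I_1^{n_1} ⋯ I_s^{n_s} M / J^{n_0+1} I_1^{n_1}
⋯ I_s^{n_s} M)` is, for all sufficiently large `n_0, …, n_s`, given by a polynomial of
total degree at most `k_0 + k_1 + ⋯ + k_s` whose coefficient of
`n_0^{k_0} n_1^{k_1} ⋯ n_s^{k_s}` is `e / (k_0! k_1! ⋯ k_s!)`. -/
def IsMixedMult (M : Type*) [AddCommGroup M] [Module A M] {s : ℕ} (J : Ideal A)
    (I : Fin s → Ideal A) (k0 : ℕ) (k : Fin s → ℕ) (e : ℕ) : Prop :=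
  ∃ P : MvPolynomial (Fin (s + 1)) ℚ, P.totalDegree ≤ k0 + ∑ i, k i ∧
    (∃ N : ℕ, ∀ n : Fin (s + 1) → ℕ, (∀ i, N ≤ n i) →
      IsFiniteLength A (mixedPiece A M J I n) ∧
      (lenNat A (mixedPiece A M J I n) : ℚ) =
        MvPolynomial.eval (fun i => (n i : ℚ)) P) ∧
    (e : ℚ) = MvPolynomial.coeff (Finsupp.equivFunOnFinite.symm (Fin.cons k0 k)) P *
      ((Nat.factorial k0 * ∏ i, Nat.factorial (k i) : ℕ) : ℚ)

/-- `e` is the mixed multiplicity `e_A(I_1^{[k_1]}, …, I_s^{[k_s]}; M)` of a family of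
`m`-primary ideals: the function `(n_1, …, n_s) ↦ ℓ_A(M / I_1^{n_1} ⋯ I_s^{n_s} M)` is, for
all sufficiently large `n_1, …, n_s`, given by a polynomial of total degree at most
`k_1 + ⋯ + k_s` whose coefficient of `n_1^{k_1} ⋯ n_s^{k_s}` is `e / (k_1! ⋯ k_s!)`. -/
def IsMixedMultPrimary (M : Type*) [AddCommGroup M] [Module A M] {s : ℕ}
    (I : Fin s → Ideal A) (k : Fin s → ℕ) (e : ℕ) : Prop :=
  ∃ P : MvPolynomial (Fin s) ℚ, P.totalDegree ≤ ∑ i, k i ∧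
    (∃ N : ℕ, ∀ n : Fin s → ℕ, (∀ i, N ≤ n i) →
      IsFiniteLength A (M ⧸ ((∏ i, I i ^ (n i)) • (⊤ : Submodule A M))) ∧
      (lenNat A (M ⧸ ((∏ i, I i ^ (n i)) • (⊤ : Submodule A M))) : ℚ) =
        MvPolynomial.eval (fun i => (n i : ℚ)) P) ∧
    (e : ℚ) = MvPolynomial.coeff (Finsupp.equivFunOnFinite.symm k) P *
      ((∏ i, Nat.factorial (k i) : ℕ) : ℚ)

/-- The submodule `(0_M : I^∞) = ⋃_n (0_M : I^n)` of `M`. -/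
def satSub (M : Type*) [AddCommGroup M] [Module A M] (I : Ideal A) : Submodule A M :=
  ⨆ n : ℕ, Submodule.torsionBySet A M ((I ^ n : Ideal A) : Set A)

/-- A polynomial function on an `A`-module `V` with values in the residue field of `A`:
an element of the subalgebra of functions generated by the linear ones. -/
def IsPolyFun [IsLocalRing A] (V : Type*) [AddCommGroup V] [Module A V]
    (f : V → ResidueField A) : Prop :=
  f ∈ Algebra.adjoin A {g : V → ResidueField A | ∃ l : V →ₗ[A] ResidueField A, g = ⇑l}

/-- A Zariski open subset of an `A`-module `V` (for `V` a finite-dimensional vector space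
over the residue field, this is the usual Zariski topology): the complement of the common
zero locus of a set of polynomial functions. -/
def IsZariskiOpen [IsLocalRing A] (V : Type*) [AddCommGroup V] [Module A V]
    (U : Set V) : Prop :=
  ∃ S : Set (V → ResidueField A), (∀ f ∈ S, IsPolyFun A V f) ∧
    U = {v | ∃ f ∈ S, f v ≠ 0}

end MixedMultDefs

/-!
Filter the Koszul complex `K(x; M)` of a sequence `x` of elements of the ideals `I i` by shifted
copies of the filtration of `M` by the submodules `I₁^{n₁} ⋯ I_t^{n_t} M`. Multiplication by an
element of `I i` is homotopic to zero on `K(x; M)`, by a homotopy of degree `e_i`, so the equation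
of a joint reduction, Cayley–Hamilton and Artin–Rees make the subcomplex `F_n K(x; M)` exact for all
large `n`. Euler characteristics of Koszul complexes are then iterated differences of Hilbert
functions.

Applied to the powers of the parameter ideal, this gives `e(x; M) = χ(K(x; M))`. Now let `X` be the
members of the joint reduction lying in the `I i` and `Y` those lying in `J`. For large `n` the
mixed multiplicity is `χ(K(Y; F_n K(X; M)))`, while the quotient `K(X; M) / F_n K(X; M)` is
supported on `V(I)`, whose dimension is at most `d - h < |Y|`, so its Koszul Euler characteristic
along `Y` vanishes. By additivity of `χ` along `K(X; M)` both numbers agree.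
-/

universe u v

/-! ### Two-periodic complexes -/

lemma length_eq_add_length_quotient {A N : Type*} [Ring A] [AddCommGroup N] [Module A N]
    (S : Submodule A N) :
    Module.length A N = Module.length A S + Module.length A (N ⧸ S) :=
  Module.length_eq_add_of_exact S.subtype S.mkQ S.injective_subtype S.mkQ_surjective
    (LinearMap.exact_subtype_mkQ S)

lemma length_eq_ker_add_range {A N P : Type*} [Ring A] [AddCommGroup N] [Module A N]
    [AddCommGroup P] [Module A P] (f : N →ₗ[A] P) :
    Module.length A N =
      Module.length A (LinearMap.ker f) + Module.length A (LinearMap.range f) := by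
  rw [length_eq_add_length_quotient (LinearMap.ker f), f.quotKerEquivRange.length_eq]

/-- A complex of modules indexed by `ℤ/2`. The Koszul complex is only needed up to its Euler
characteristic, so its homological grading is folded to a parity. -/
structure TwoPeriodicComplex (A : Type u) [CommRing A] where
  even : Type v
  odd : Type v
  [addCommGroupEven : AddCommGroup even]
  [addCommGroupOdd : AddCommGroup odd]
  [moduleEven : Module A even]
  [moduleOdd : Module A odd]
  dEven : even →ₗ[A] odd
  dOdd : odd →ₗ[A] even
  dOdd_dEven : ∀ v, dOdd (dEven v) = 0
  dEven_dOdd : ∀ v, dEven (dOdd v) = 0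

namespace TwoPeriodicComplex

attribute [instance] addCommGroupEven addCommGroupOdd moduleEven moduleOdd
attribute [simp] dOdd_dEven dEven_dOdd

section Homology

variable {A : Type u} [CommRing A] {X Y Z : TwoPeriodicComplex.{u, v} A}

/-- The complex with the two parities exchanged. -/
abbrev swap (X : TwoPeriodicComplex.{u, v} A) : TwoPeriodicComplex.{u, v} A where
  even := X.odd
  odd := X.even
  dEven := X.dOdd
  dOdd := X.dEven
  dOdd_dEven := X.dEven_dOdd
  dEven_dOdd := X.dOdd_dEven

/-- The homology in even degree; the odd one is that of `X.swap`. -/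
abbrev homology (X : TwoPeriodicComplex.{u, v} A) : Type v :=
  LinearMap.ker X.dEven ⧸ (LinearMap.range X.dOdd).submoduleOf (LinearMap.ker X.dEven)

/-- The homology class of an even cycle. -/
def homologyClass (X : TwoPeriodicComplex.{u, v} A) : LinearMap.ker X.dEven →ₗ[A] X.homology :=
  Submodule.mkQ _

lemma homologyClass_surjective (X : TwoPeriodicComplex.{u, v} A) :
    Function.Surjective X.homologyClass :=
  Submodule.mkQ_surjective _

lemma homologyClass_eq_zero {z : LinearMap.ker X.dEven} :
    X.homologyClass z = 0 ↔ ∃ w, X.dOdd w = z := by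
  rw [homologyClass, Submodule.mkQ_apply, Submodule.Quotient.mk_eq_zero,
    Submodule.submoduleOf, Submodule.mem_comap, LinearMap.mem_range, Submodule.subtype_apply]

lemma homologyClass_eq_iff {z z' : LinearMap.ker X.dEven} :
    X.homologyClass z = X.homologyClass z' ↔ ∃ w, X.dOdd w = (z : X.even) - z' := by
  rw [← sub_eq_zero, ← map_sub, homologyClass_eq_zero, AddSubgroupClass.coe_sub]

/-- The complex is acyclic. -/
def IsAcyclic (X : TwoPeriodicComplex.{u, v} A) : Prop :=
  Function.Exact X.dOdd X.dEven ∧ Function.Exact X.dEven X.dOdd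

/-- Morphisms of two-periodic complexes. -/
structure Hom (X Y : TwoPeriodicComplex.{u, v} A) where
  even : X.even →ₗ[A] Y.even
  odd : X.odd →ₗ[A] Y.odd
  comm_even : ∀ v, Y.dEven (even v) = odd (X.dEven v)
  comm_odd : ∀ v, Y.dOdd (odd v) = even (X.dOdd v)

/-- A morphism with the two parities exchanged. -/
abbrev Hom.swap (f : Hom X Y) : Hom X.swap Y.swap where
  even := f.odd
  odd := f.even
  comm_even := f.comm_odd
  comm_odd := f.comm_even

/-- The restriction of a morphism to even cycles. -/
def Hom.mapCycles (f : Hom X Y) : LinearMap.ker X.dEven →ₗ[A] LinearMap.ker Y.dEven :=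
  f.even.restrict fun v hv => by
    rw [LinearMap.mem_ker] at hv ⊢
    rw [f.comm_even, hv, map_zero]

lemma Hom.coe_mapCycles (f : Hom X Y) (z : LinearMap.ker X.dEven) :
    (f.mapCycles z : Y.even) = f.even z := rfl

/-- The map induced on even homology. -/
def Hom.mapHomology (f : Hom X Y) : X.homology →ₗ[A] Y.homology :=
  Submodule.mapQ _ _ f.mapCycles fun _ ⟨w, hw⟩ =>
    ⟨f.odd w, (f.comm_odd w).trans (congrArg f.even hw)⟩

lemma Hom.mapHomology_homologyClass (f : Hom X Y) (z : LinearMap.ker X.dEven) :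
    f.mapHomology (X.homologyClass z) = Y.homologyClass (f.mapCycles z) := rfl

/-- Short exact sequences of two-periodic complexes. -/
structure ShortExact (i : Hom X Y) (p : Hom Y Z) : Prop where
  injective_even : Function.Injective i.even
  injective_odd : Function.Injective i.odd
  exact_even : Function.Exact i.even p.even
  exact_odd : Function.Exact i.odd p.odd
  surjective_even : Function.Surjective p.even
  surjective_odd : Function.Surjective p.odd

namespace ShortExact

variable {i : Hom X Y} {p : Hom Y Z}

lemma swap (h : ShortExact i p) : ShortExact i.swap p.swap where
  injective_even := h.injective_odd
  injective_odd := h.injective_even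
  exact_even := h.exact_odd
  exact_odd := h.exact_even
  surjective_even := h.surjective_odd
  surjective_odd := h.surjective_even

lemma exact_mapHomology (h : ShortExact i p) :
    Function.Exact i.mapHomology p.mapHomology := by
  intro y
  obtain ⟨⟨y, hy⟩, rfl⟩ := Y.homologyClass_surjective y
  rw [p.mapHomology_homologyClass, homologyClass_eq_zero, Hom.coe_mapCycles]
  constructor
  · rintro ⟨w, hw⟩
    obtain ⟨w, rfl⟩ := h.surjective_odd w
    rw [p.comm_odd] at hw
    obtain ⟨x, hx⟩ := (h.exact_even (y - Y.dOdd w)).1 (by rw [map_sub, hw, sub_self])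
    have hxk : X.dEven x = 0 := h.injective_odd <| by
      rw [← i.comm_even, hx, map_sub, Y.dEven_dOdd, LinearMap.mem_ker.1 hy, sub_zero, map_zero]
    refine ⟨X.homologyClass ⟨x, hxk⟩, ?_⟩
    rw [i.mapHomology_homologyClass, homologyClass_eq_iff]
    exact ⟨-w, by rw [Hom.coe_mapCycles, hx, map_neg]; abel⟩
  · rintro ⟨x, hx⟩
    obtain ⟨x, rfl⟩ := X.homologyClass_surjective x
    rw [i.mapHomology_homologyClass, homologyClass_eq_iff, Hom.coe_mapCycles] at hx
    obtain ⟨w, hw⟩ := hx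
    refine ⟨-p.odd w, ?_⟩
    rw [map_neg, p.comm_odd, hw, map_sub, h.exact_even.apply_apply_eq_zero, zero_sub, neg_neg]

lemma dEven_mem_range (h : ShortExact i p) (w : LinearMap.ker (Z.dEven ∘ₗ p.even)) :
    Y.dEven w ∈ LinearMap.range i.odd :=
  (h.exact_odd _).1 (by rw [← p.comm_even]; exact w.2)

/-- The boundary of a chain of `Y` lifting a cycle of `Z`, as a cycle of `X`. It represents the
connecting homomorphism, which is never formed: only its kernel and its range matter. -/
noncomputable def boundary (h : ShortExact i p) :
    LinearMap.ker (Z.dEven ∘ₗ p.even) →ₗ[A] LinearMap.ker X.dOdd :=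
  ((LinearEquiv.ofInjective i.odd h.injective_odd).symm.toLinearMap ∘ₗ
      (Y.dEven.domRestrict _).codRestrict (LinearMap.range i.odd) h.dEven_mem_range).codRestrict _
    fun w => h.injective_even <| by
      rw [← i.comm_odd, map_zero]
      exact (congrArg Y.dOdd (LinearEquiv.ofInjective_symm_apply (h := h.injective_odd) ..)).trans
        (Y.dOdd_dEven _)

lemma odd_boundary (h : ShortExact i p) (w : LinearMap.ker (Z.dEven ∘ₗ p.even)) :
    i.odd (h.boundary w) = Y.dEven w :=
  LinearEquiv.ofInjective_symm_apply (h := h.injective_odd) ..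

lemma range_boundary (h : ShortExact i p) :
    LinearMap.range (X.swap.homologyClass ∘ₗ h.boundary) =
      LinearMap.ker i.swap.mapHomology := by
  apply le_antisymm
  · rintro _ ⟨w, rfl⟩
    rw [LinearMap.mem_ker, LinearMap.comp_apply, Hom.mapHomology_homologyClass,
      homologyClass_eq_zero]
    exact ⟨w, (h.odd_boundary w).symm⟩
  · intro x hx
    obtain ⟨x, rfl⟩ := X.swap.homologyClass_surjective x
    rw [LinearMap.mem_ker, Hom.mapHomology_homologyClass, homologyClass_eq_zero] at hx
    obtain ⟨w, hw⟩ := hx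
    replace hw : Y.dEven w = i.odd x := hw
    refine ⟨⟨w, ?_⟩, congrArg X.swap.homologyClass (Subtype.ext (h.injective_odd ?_))⟩
    · rw [LinearMap.mem_ker, LinearMap.comp_apply, p.comm_even, hw,
        h.exact_odd.apply_apply_eq_zero]
    · exact (h.odd_boundary _).trans hw

/-- The class in the cokernel of `p.mapHomology` of the cycle lifted by a chain of `Y`. -/
def cokernelClass (p : Hom Y Z) :
    LinearMap.ker (Z.dEven ∘ₗ p.even) →ₗ[A] Z.homology ⧸ LinearMap.range p.mapHomology :=
  Submodule.mkQ _ ∘ₗ Z.homologyClass ∘ₗ p.even.restrict fun _ hv => hv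

lemma cokernelClass_surjective (h : ShortExact i p) :
    Function.Surjective (cokernelClass p) := by
  intro z
  obtain ⟨z, rfl⟩ := Submodule.mkQ_surjective _ z
  obtain ⟨⟨z, hz⟩, rfl⟩ := Z.homologyClass_surjective z
  obtain ⟨y, rfl⟩ := h.surjective_even z
  exact ⟨⟨y, hz⟩, rfl⟩

lemma cokernelClass_eq_zero {w : LinearMap.ker (Z.dEven ∘ₗ p.even)} :
    cokernelClass p w = 0 ↔
      ∃ y : LinearMap.ker Y.dEven, ∃ v, Z.dOdd v = p.even y - p.even w := by
  simp only [cokernelClass, LinearMap.comp_apply, Submodule.mkQ_apply,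
    Submodule.Quotient.mk_eq_zero, LinearMap.mem_range, Y.homologyClass_surjective.exists,
    Hom.mapHomology_homologyClass, homologyClass_eq_iff]
  rfl

lemma ker_cokernelClass (h : ShortExact i p) :
    LinearMap.ker (cokernelClass p) = LinearMap.ker (X.swap.homologyClass ∘ₗ h.boundary) := by
  ext w
  rw [LinearMap.mem_ker, LinearMap.mem_ker, LinearMap.comp_apply, cokernelClass_eq_zero,
    homologyClass_eq_zero]
  constructor
  · rintro ⟨y, v, hv⟩
    obtain ⟨v, rfl⟩ := h.surjective_odd v
    rw [p.comm_odd] at hv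
    obtain ⟨x, hx⟩ := (h.exact_even (w - y + Y.dOdd v)).1 (by rw [map_add, map_sub, hv]; abel)
    refine ⟨x, h.injective_odd ?_⟩
    rw [h.odd_boundary]
    change i.odd (X.dEven x) = _
    rw [← i.comm_even, hx, map_add, map_sub, Y.dEven_dOdd, LinearMap.mem_ker.1 y.2, sub_zero,
      add_zero]
  · rintro ⟨x, hx⟩
    replace hx : X.dEven x = h.boundary w := hx
    refine ⟨⟨w - i.even x, ?_⟩, 0, ?_⟩
    · rw [LinearMap.mem_ker, map_sub, i.comm_even, hx, h.odd_boundary, sub_self]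
    · rw [map_sub, h.exact_even.apply_apply_eq_zero, sub_zero, sub_self, map_zero]

lemma length_cokernel_mapHomology (h : ShortExact i p) :
    Module.length A (Z.homology ⧸ LinearMap.range p.mapHomology) =
      Module.length A (LinearMap.ker i.swap.mapHomology) := by
  rw [← h.range_boundary, ← (LinearMap.quotKerEquivRange _).length_eq, ← h.ker_cokernelClass,
    ((cokernelClass p).quotKerEquivOfSurjective h.cokernelClass_surjective).length_eq]

/-- Three consecutive terms of the long exact sequence of homology. -/
lemma length_homology (h : ShortExact i p) :
    Module.length A X.homology = Module.length A (LinearMap.ker i.mapHomology) +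
        Module.length A (LinearMap.range i.mapHomology) ∧
      Module.length A Y.homology = Module.length A (LinearMap.range i.mapHomology) +
        Module.length A (LinearMap.range p.mapHomology) ∧
      Module.length A Z.homology = Module.length A (LinearMap.range p.mapHomology) +
        Module.length A (LinearMap.ker i.swap.mapHomology) := by
  refine ⟨length_eq_ker_add_range _, ?_, ?_⟩
  · rw [length_eq_ker_add_range p.mapHomology, h.exact_mapHomology.linearMap_ker_eq]
  · rw [length_eq_add_length_quotient (LinearMap.range p.mapHomology),
      h.length_cokernel_mapHomology]

end ShortExact

/-- Both homology modules have finite length. -/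
def FiniteHomology (X : TwoPeriodicComplex.{u, v} A) : Prop :=
  Module.length A X.homology ≠ ⊤ ∧ Module.length A X.swap.homology ≠ ⊤

/-- The Euler characteristic: the length of the even homology minus that of the odd homology.
Meaningful only under `FiniteHomology`, as infinite lengths are counted as `0`. -/
noncomputable def eulerChar (X : TwoPeriodicComplex.{u, v} A) : ℤ :=
  ((Module.length A X.homology).toNat : ℤ) - (Module.length A X.swap.homology).toNat

namespace ShortExact

variable {i : Hom X Y} {p : Hom Y Z}

lemma finiteHomology_left (h : ShortExact i p) (hY : Y.FiniteHomology) (hZ : Z.FiniteHomology) :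
    X.FiniteHomology := by
  obtain ⟨e₁, e₂, e₃⟩ := h.length_homology
  obtain ⟨e₄, e₅, e₆⟩ := h.swap.length_homology
  simp only [FiniteHomology, e₁, e₂, e₃, e₄, e₅, e₆, ne_eq, ENat.add_eq_top] at *
  tauto

lemma finiteHomology_middle (h : ShortExact i p) (hX : X.FiniteHomology)
    (hZ : Z.FiniteHomology) : Y.FiniteHomology := by
  obtain ⟨e₁, e₂, e₃⟩ := h.length_homology
  obtain ⟨e₄, e₅, e₆⟩ := h.swap.length_homology
  simp only [FiniteHomology, e₁, e₂, e₃, e₄, e₅, e₆, ne_eq, ENat.add_eq_top] at *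
  tauto

lemma finiteHomology_right (h : ShortExact i p) (hX : X.FiniteHomology)
    (hY : Y.FiniteHomology) : Z.FiniteHomology := by
  obtain ⟨e₁, e₂, e₃⟩ := h.length_homology
  obtain ⟨e₄, e₅, e₆⟩ := h.swap.length_homology
  simp only [FiniteHomology, e₁, e₂, e₃, e₄, e₅, e₆, ne_eq, ENat.add_eq_top] at *
  tauto

lemma eulerChar_eq (h : ShortExact i p) (hX : X.FiniteHomology) (hZ : Z.FiniteHomology) :
    Y.eulerChar = X.eulerChar + Z.eulerChar := by
  obtain ⟨e₁, e₂, e₃⟩ := h.length_homology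
  obtain ⟨e₄, e₅, e₆⟩ := h.swap.length_homology
  simp only [FiniteHomology, eulerChar, e₁, e₂, e₃, e₄, e₅, e₆, ne_eq, ENat.add_eq_top,
    not_or] at *
  simp only [ENat.toNat_add, hX, hZ, not_false_eq_true, ne_eq]
  push_cast
  ring

end ShortExact

lemma length_ker_dEven (X : TwoPeriodicComplex.{u, v} A) :
    Module.length A (LinearMap.ker X.dEven) =
      Module.length A (LinearMap.range X.dOdd) + Module.length A X.homology := by
  have hle : LinearMap.range X.dOdd ≤ LinearMap.ker X.dEven := by
    rintro _ ⟨w, rfl⟩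
    exact X.dEven_dOdd w
  rw [length_eq_add_length_quotient
    ((LinearMap.range X.dOdd).submoduleOf (LinearMap.ker X.dEven)),
    (Submodule.submoduleOfEquivOfLe hle).length_eq]

lemma finiteHomology_and_eulerChar_of_length_ne_top
    (hEven : Module.length A X.even ≠ ⊤) (hOdd : Module.length A X.odd ≠ ⊤) :
    X.FiniteHomology ∧ X.eulerChar =
      (Module.length A X.even).toNat - (Module.length A X.odd).toNat := by
  have hker : Module.length A (LinearMap.ker X.dOdd) =
      Module.length A (LinearMap.range X.dEven) + Module.length A X.swap.homology :=
    X.swap.length_ker_dEven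
  rw [length_eq_ker_add_range X.dEven, X.length_ker_dEven] at hEven ⊢
  rw [length_eq_ker_add_range X.dOdd, hker] at hOdd ⊢
  simp only [ne_eq, ENat.add_eq_top, not_or] at hEven hOdd
  refine ⟨⟨hEven.1.2, hOdd.1.2⟩, ?_⟩
  simp only [eulerChar, ENat.toNat_add, ENat.add_eq_top, hEven, hOdd, not_false_eq_true, ne_eq,
    or_self]
  push_cast
  ring

lemma IsAcyclic.homology_subsingleton (h : X.IsAcyclic) : Subsingleton X.homology :=
  Submodule.Quotient.subsingleton_iff.2 <| by
    rw [h.1.linearMap_ker_eq, Submodule.submoduleOf_self]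

lemma IsAcyclic.finiteHomology (h : X.IsAcyclic) : X.FiniteHomology := by
  have := h.homology_subsingleton
  have := IsAcyclic.homology_subsingleton (X := X.swap) ⟨h.2, h.1⟩
  simp [FiniteHomology]

lemma IsAcyclic.eulerChar_eq_zero (h : X.IsAcyclic) : X.eulerChar = 0 := by
  have := h.homology_subsingleton
  have := IsAcyclic.homology_subsingleton (X := X.swap) ⟨h.2, h.1⟩
  simp [eulerChar]

end Homology

section Cone

variable {A : Type u} [CommRing A] {X Y Z : TwoPeriodicComplex.{u, v} A}

/-- The mapping cone of multiplication by `y` on `X`, i.e. the tensor product of `X` with the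
Koszul complex of `y`. -/
abbrev cone (y : A) (X : TwoPeriodicComplex.{u, v} A) : TwoPeriodicComplex.{u, v} A where
  even := X.even × X.odd
  odd := X.odd × X.even
  dEven := (X.dEven.coprod (y • LinearMap.id)).prod (-(X.dOdd ∘ₗ LinearMap.snd A X.even X.odd))
  dOdd := (X.dOdd.coprod (y • LinearMap.id)).prod (-(X.dEven ∘ₗ LinearMap.snd A X.odd X.even))
  dOdd_dEven := by
    rintro ⟨a, b⟩
    simp
  dEven_dOdd := by
    rintro ⟨a, b⟩
    simp

/-- The map of cones induced by a morphism. -/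
abbrev Hom.cone (y : A) (f : Hom X Y) : Hom (cone y X) (cone y Y) where
  even := f.even.prodMap f.odd
  odd := f.odd.prodMap f.even
  comm_even := by
    rintro ⟨a, b⟩
    simp [f.comm_even, f.comm_odd]
  comm_odd := by
    rintro ⟨a, b⟩
    simp [f.comm_even, f.comm_odd]

lemma ShortExact.cone (y : A) {i : Hom X Y} {p : Hom Y Z} (h : ShortExact i p) :
    ShortExact (i.cone y) (p.cone y) where
  injective_even := h.injective_even.prodMap h.injective_odd
  injective_odd := h.injective_odd.prodMap h.injective_even
  exact_even := by
    rintro ⟨a, b⟩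
    have := h.exact_even a
    have := h.exact_odd b
    simp_all
  exact_odd := by
    rintro ⟨a, b⟩
    have := h.exact_odd a
    have := h.exact_even b
    simp_all
  surjective_even := h.surjective_even.prodMap h.surjective_odd
  surjective_odd := h.surjective_odd.prodMap h.surjective_even

/-- The Koszul complex of a list of ring elements with coefficients in `X`, as an iterated
cone. -/
def koszul : List A → TwoPeriodicComplex.{u, v} A → TwoPeriodicComplex.{u, v} A
  | [], X => X
  | a :: L, X => koszul L (cone a X)

lemma koszul_append (L L' : List A) (X : TwoPeriodicComplex.{u, v} A) :
    koszul (L ++ L') X = koszul L' (koszul L X) := by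
  induction L generalizing X with
  | nil => rfl
  | cons a _ ih => exact ih _

/-- The map of Koszul complexes induced by a morphism. -/
def Hom.koszul : (L : List A) → {X Y : TwoPeriodicComplex.{u, v} A} → Hom X Y →
    Hom (koszul L X) (koszul L Y)
  | [], _, _, f => f
  | a :: L, _, _, f => Hom.koszul L (f.cone a)

lemma ShortExact.koszul (L : List A) {X Y Z : TwoPeriodicComplex.{u, v} A} {i : Hom X Y}
    {p : Hom Y Z} (h : ShortExact i p) : ShortExact (i.koszul L) (p.koszul L) := by
  induction L generalizing X Y Z with
  | nil => exact h
  | cons a _ ih => exact ih (h.cone a)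

/-- A module as a complex concentrated in even degree. -/
abbrev of (A : Type u) [CommRing A] (N : Type v) [AddCommGroup N] [Module A N] :
    TwoPeriodicComplex.{u, v} A where
  even := N
  odd := PUnit
  dEven := 0
  dOdd := 0
  dOdd_dEven _ := rfl
  dEven_dOdd _ := rfl

end Cone

/-- Subcomplexes of a two-periodic complex. -/
structure Subcomplex {A : Type u} [CommRing A] (X : TwoPeriodicComplex.{u, v} A) where
  even : Submodule A X.even
  odd : Submodule A X.odd
  dEven_mem : ∀ v ∈ even, X.dEven v ∈ odd
  dOdd_mem : ∀ v ∈ odd, X.dOdd v ∈ even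

namespace Subcomplex

variable {A : Type u} [CommRing A] {X Z : TwoPeriodicComplex.{u, v} A}

instance : LE (Subcomplex X) := ⟨fun V U => V.even ≤ U.even ∧ V.odd ≤ U.odd⟩

instance : Top (Subcomplex X) := ⟨⊤, ⊤, fun _ _ => trivial, fun _ _ => trivial⟩

/-- A subcomplex with the two parities exchanged. -/
abbrev swap (V : Subcomplex X) : Subcomplex X.swap := ⟨V.odd, V.even, V.dOdd_mem, V.dEven_mem⟩

/-- The complex underlying a subcomplex. -/
abbrev toComplex (V : Subcomplex X) : TwoPeriodicComplex.{u, v} A where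
  even := V.even
  odd := V.odd
  dEven := X.dEven.restrict V.dEven_mem
  dOdd := X.dOdd.restrict V.dOdd_mem
  dOdd_dEven v := Subtype.ext (X.dOdd_dEven v)
  dEven_dOdd v := Subtype.ext (X.dEven_dOdd v)

/-- The inclusion of a subcomplex. -/
abbrev subtype (V : Subcomplex X) : Hom V.toComplex X where
  even := V.even.subtype
  odd := V.odd.subtype
  comm_even _ := rfl
  comm_odd _ := rfl

/-- The quotient of a complex by a subcomplex. -/
abbrev quotient (V : Subcomplex X) : TwoPeriodicComplex.{u, v} A where
  even := X.even ⧸ V.even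
  odd := X.odd ⧸ V.odd
  dEven := V.even.mapQ V.odd X.dEven V.dEven_mem
  dOdd := V.odd.mapQ V.even X.dOdd V.dOdd_mem
  dOdd_dEven v := by
    obtain ⟨v, rfl⟩ := V.even.mkQ_surjective v
    simp
  dEven_dOdd v := by
    obtain ⟨v, rfl⟩ := V.odd.mkQ_surjective v
    simp

/-- The projection to the quotient by a subcomplex. -/
abbrev mkQ (V : Subcomplex X) : Hom X V.quotient where
  even := V.even.mkQ
  odd := V.odd.mkQ
  comm_even _ := rfl
  comm_odd _ := rfl

/-- `p` is surjective with kernel `V`. -/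
structure IsKernel (V : Subcomplex X) (p : Hom X Z) : Prop where
  ker_even : LinearMap.ker p.even = V.even
  ker_odd : LinearMap.ker p.odd = V.odd
  surjective_even : Function.Surjective p.even
  surjective_odd : Function.Surjective p.odd

lemma isKernel_mkQ (V : Subcomplex X) : V.IsKernel V.mkQ where
  ker_even := V.even.ker_mkQ
  ker_odd := V.odd.ker_mkQ
  surjective_even := V.even.mkQ_surjective
  surjective_odd := V.odd.mkQ_surjective

lemma IsKernel.shortExact {V : Subcomplex X} {p : Hom X Z} (h : V.IsKernel p) :
    ShortExact V.subtype p where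
  injective_even := V.even.injective_subtype
  injective_odd := V.odd.injective_subtype
  exact_even := LinearMap.exact_iff.2 (by rw [h.ker_even, V.even.range_subtype])
  exact_odd := LinearMap.exact_iff.2 (by rw [h.ker_odd, V.odd.range_subtype])
  surjective_even := h.surjective_even
  surjective_odd := h.surjective_odd

/-- The cone formed from `U` and a copy of `V` on which multiplication by `y` lands in `U`. -/
abbrev cone (y : A) (U V : Subcomplex X) (smul_even : ∀ v ∈ V.even, y • v ∈ U.even)
    (smul_odd : ∀ v ∈ V.odd, y • v ∈ U.odd) : Subcomplex (cone y X) where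
  even := U.even.prod V.odd
  odd := U.odd.prod V.even
  dEven_mem := by
    rintro ⟨a, b⟩ ⟨ha, hb⟩
    exact ⟨add_mem (U.dEven_mem _ ha) (smul_odd _ hb), neg_mem (V.dOdd_mem _ hb)⟩
  dOdd_mem := by
    rintro ⟨a, b⟩ ⟨ha, hb⟩
    exact ⟨add_mem (U.dOdd_mem _ ha) (smul_even _ hb), neg_mem (V.dEven_mem _ hb)⟩

lemma IsKernel.cone (y : A) {V : Subcomplex X} {p : Hom X Z} (h : V.IsKernel p) :
    (V.cone y V (fun _ => V.even.smul_mem y) (fun _ => V.odd.smul_mem y)).IsKernel (p.cone y) where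
  ker_even := by rw [LinearMap.ker_prodMap, h.ker_even, h.ker_odd]
  ker_odd := by rw [LinearMap.ker_prodMap, h.ker_even, h.ker_odd]
  surjective_even := h.surjective_even.prodMap h.surjective_odd
  surjective_odd := h.surjective_odd.prodMap h.surjective_even

lemma cone_top (y : A) : (⊤ : Subcomplex X).cone y ⊤ (fun _ _ => trivial) (fun _ _ => trivial) =
    ⊤ := by
  change (⟨Submodule.prod ⊤ ⊤, Submodule.prod ⊤ ⊤, _, _⟩ :
    Subcomplex (TwoPeriodicComplex.cone y X)) = ⟨⊤, ⊤, _, _⟩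
  simp only [Submodule.prod_top]

end Subcomplex

end TwoPeriodicComplex

section RelLength

variable {A N P : Type*} [CommRing A] [AddCommGroup N] [Module A N] [AddCommGroup P] [Module A P]

/-- The length of `U / V` for submodules `V ≤ U`. -/
noncomputable def relLength (U V : Submodule A N) : ℕ∞ :=
  Module.length A (U ⧸ V.submoduleOf U)

lemma relLength_eq_length_of_surjective {U V : Submodule A N} (f : U →ₗ[A] P)
    (hf : Function.Surjective f) (hker : LinearMap.ker f = V.submoduleOf U) :
    relLength U V = Module.length A P := by
  rw [relLength, ← hker, (f.quotKerEquivOfSurjective hf).length_eq]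

lemma relLength_self (U : Submodule A N) : relLength U U = 0 := by
  rw [relLength, Submodule.submoduleOf_self, Module.length_eq_zero_iff]
  exact Submodule.Quotient.subsingleton_iff.2 rfl

lemma relLength_top (V : Submodule A N) : relLength ⊤ V = Module.length A (N ⧸ V) :=
  relLength_eq_length_of_surjective (V.mkQ.domRestrict ⊤)
    (V.mkQ_surjective.comp Submodule.topEquiv.surjective) (by
      rw [LinearMap.ker_domRestrict, V.ker_mkQ]; rfl)

lemma relLength_trans {U V W : Submodule A N} (hVU : V ≤ U) (hWV : W ≤ V) :
    relLength U W = relLength U V + relLength V W := by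
  let f : V →ₗ[A] U ⧸ W.submoduleOf U := (W.submoduleOf U).mkQ ∘ₗ Submodule.inclusion hVU
  let g : U ⧸ W.submoduleOf U →ₗ[A] U ⧸ V.submoduleOf U :=
    Submodule.factor (Submodule.comap_mono hWV)
  have hg : Function.Surjective g := Submodule.factor_surjective _
  have hfg : LinearMap.range f = LinearMap.ker g := by
    rw [LinearMap.range_comp, Submodule.range_inclusion]
    exact (Submodule.ker_mapQ (W.submoduleOf U) (V.submoduleOf U) LinearMap.id _).symm
  have hf : LinearMap.ker f = W.submoduleOf V := by
    rw [LinearMap.ker_comp, Submodule.ker_mkQ]; rfl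
  rw [relLength, length_eq_ker_add_range g, ← hfg, ← f.quotKerEquivRange.length_eq, hf,
    LinearMap.range_eq_top.2 hg, Module.length_top, add_comm]
  rfl

lemma relLength_prod (U V : Submodule A N) (U' V' : Submodule A P) :
    relLength (U.prod U') (V.prod V') = relLength U V + relLength U' V' := by
  rw [relLength.eq_def U, relLength.eq_def U', ← Module.length_prod]
  let f : U.prod U' →ₗ[A] (U ⧸ V.submoduleOf U) × (U' ⧸ V'.submoduleOf U') :=
    (Submodule.mkQ _ ∘ₗ (LinearMap.fst A N P).restrict fun _ hv => (Submodule.mem_prod.1 hv).1).prod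
      (Submodule.mkQ _ ∘ₗ (LinearMap.snd A N P).restrict fun _ hv => (Submodule.mem_prod.1 hv).2)
  refine relLength_eq_length_of_surjective f ?_ ?_
  · rintro ⟨a, b⟩
    obtain ⟨a, rfl⟩ := Submodule.mkQ_surjective _ a
    obtain ⟨b, rfl⟩ := Submodule.mkQ_surjective _ b
    exact ⟨⟨(a, b), a.2, b.2⟩, rfl⟩
  · rw [LinearMap.ker_prod, LinearMap.ker_comp, LinearMap.ker_comp, Submodule.ker_mkQ,
      Submodule.ker_mkQ]
    rfl

end RelLength

namespace TwoPeriodicComplex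

namespace Subcomplex

variable {A : Type u} [CommRing A] {X : TwoPeriodicComplex.{u, v} A} {U V W : Subcomplex X}

/-- `V` is contained in `U` with finite colength. -/
structure FiniteIndex (U V : Subcomplex X) : Prop where
  le : V ≤ U
  even_ne_top : relLength U.even V.even ≠ ⊤
  odd_ne_top : relLength U.odd V.odd ≠ ⊤

/-- The Euler characteristic of `U / V`, computed from its terms. Meaningful only under
`FiniteIndex U V`, as infinite lengths are counted as `0`. -/
noncomputable def relEulerChar (U V : Subcomplex X) : ℤ :=
  ((relLength U.even V.even).toNat : ℤ) - (relLength U.odd V.odd).toNat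

lemma FiniteIndex.refl (U : Subcomplex X) : FiniteIndex U U :=
  ⟨⟨le_rfl, le_rfl⟩, by simp [relLength_self], by simp [relLength_self]⟩

lemma FiniteIndex.trans (hUV : FiniteIndex U V) (hVW : FiniteIndex V W) : FiniteIndex U W where
  le := ⟨hVW.le.1.trans hUV.le.1, hVW.le.2.trans hUV.le.2⟩
  even_ne_top := by
    rw [relLength_trans hUV.le.1 hVW.le.1]
    simp [hUV.even_ne_top, hVW.even_ne_top]
  odd_ne_top := by
    rw [relLength_trans hUV.le.2 hVW.le.2]
    simp [hUV.odd_ne_top, hVW.odd_ne_top]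

lemma FiniteIndex.relEulerChar_trans (hUV : FiniteIndex U V) (hVW : FiniteIndex V W) :
    relEulerChar U W = relEulerChar U V + relEulerChar V W := by
  rw [relEulerChar, relLength_trans hUV.le.1 hVW.le.1, relLength_trans hUV.le.2 hVW.le.2,
    ENat.toNat_add hUV.even_ne_top hVW.even_ne_top,
    ENat.toNat_add hUV.odd_ne_top hVW.odd_ne_top, relEulerChar, relEulerChar]
  push_cast
  ring

/-- A subcomplex `V` of `X`, viewed inside a larger subcomplex `U`. -/
abbrev subcomplexOf (V U : Subcomplex X) : Subcomplex U.toComplex where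
  even := V.even.submoduleOf U.even
  odd := V.odd.submoduleOf U.odd
  dEven_mem _ hv := V.dEven_mem _ hv
  dOdd_mem _ hv := V.dOdd_mem _ hv

/-- The inclusion between nested subcomplexes. -/
abbrev inclusion (h : V ≤ U) : Hom V.toComplex U.toComplex where
  even := Submodule.inclusion h.1
  odd := Submodule.inclusion h.2
  comm_even _ := rfl
  comm_odd _ := rfl

lemma shortExact_inclusion (h : V ≤ U) :
    ShortExact (inclusion h) (V.subcomplexOf U).mkQ where
  injective_even := Submodule.inclusion_injective h.1
  injective_odd := Submodule.inclusion_injective h.2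
  exact_even := LinearMap.exact_iff.2 (by rw [Submodule.ker_mkQ, Submodule.range_inclusion]; rfl)
  exact_odd := LinearMap.exact_iff.2 (by rw [Submodule.ker_mkQ, Submodule.range_inclusion]; rfl)
  surjective_even := Submodule.mkQ_surjective _
  surjective_odd := Submodule.mkQ_surjective _

lemma FiniteIndex.finiteHomology_iff (h : FiniteIndex U V) :
    U.toComplex.FiniteHomology ↔ V.toComplex.FiniteHomology := by
  have hquot := (finiteHomology_and_eulerChar_of_length_ne_top
    (X := (V.subcomplexOf U).quotient) h.even_ne_top h.odd_ne_top).1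
  have hses := shortExact_inclusion h.le
  exact ⟨fun hU => hses.finiteHomology_left hU hquot,
    fun hV => hses.finiteHomology_middle hV hquot⟩

lemma FiniteIndex.eulerChar_eq (h : FiniteIndex U V) (hV : V.toComplex.FiniteHomology) :
    U.toComplex.eulerChar = V.toComplex.eulerChar + relEulerChar U V := by
  obtain ⟨hquot, heq⟩ := finiteHomology_and_eulerChar_of_length_ne_top
    (X := (V.subcomplexOf U).quotient) h.even_ne_top h.odd_ne_top
  rw [(shortExact_inclusion h.le).eulerChar_eq hV hquot, heq]
  rfl

variable (X) in
lemma shortExact_top : ShortExact (⊤ : Subcomplex X).subtype (⊤ : Subcomplex X).mkQ :=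
  (isKernel_mkQ _).shortExact

variable (X) in
lemma finiteHomology_quotient_top_and_eulerChar :
    (⊤ : Subcomplex X).quotient.FiniteHomology ∧ (⊤ : Subcomplex X).quotient.eulerChar = 0 := by
  have hEven : Module.length A (⊤ : Subcomplex X).quotient.even = 0 :=
    Module.length_eq_zero_iff.2 (Submodule.Quotient.subsingleton_iff.2 rfl)
  have hOdd : Module.length A (⊤ : Subcomplex X).quotient.odd = 0 :=
    Module.length_eq_zero_iff.2 (Submodule.Quotient.subsingleton_iff.2 rfl)
  obtain ⟨hfin, heq⟩ := finiteHomology_and_eulerChar_of_length_ne_top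
    (X := (⊤ : Subcomplex X).quotient) (by simp [hEven]) (by simp [hOdd])
  exact ⟨hfin, by simp [heq, hEven, hOdd]⟩

lemma finiteHomology_of_top (h : (⊤ : Subcomplex X).toComplex.FiniteHomology) :
    X.FiniteHomology :=
  (shortExact_top X).finiteHomology_middle h (finiteHomology_quotient_top_and_eulerChar X).1

lemma eulerChar_top (h : (⊤ : Subcomplex X).toComplex.FiniteHomology) :
    (⊤ : Subcomplex X).toComplex.eulerChar = X.eulerChar := by
  obtain ⟨hfin, heq⟩ := finiteHomology_quotient_top_and_eulerChar X
  rw [(shortExact_top X).eulerChar_eq h hfin, heq, add_zero]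

end Subcomplex

end TwoPeriodicComplex

open scoped Pointwise

/-! ### Multiplicity systems and the Koszul characteristic -/

section MultiplicitySystem

variable {A : Type u} [CommRing A] {N N₁ N₂ N₃ : Type v} [AddCommGroup N] [Module A N]
  [AddCommGroup N₁] [Module A N₁] [AddCommGroup N₂] [Module A N₂] [AddCommGroup N₃] [Module A N₃]

lemma isMaximal_of_mem_support_of_isFiniteLength (h : IsFiniteLength A N) :
    ∀ p ∈ Module.support A N, p.asIdeal.IsMaximal := by
  induction h with
  | of_subsingleton => simp [Module.support_eq_empty]
  | @of_simple_quotient M _ _ N' _ _ ih =>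
    intro p hp
    rw [Module.support_of_exact (LinearMap.exact_subtype_mkQ N') N'.injective_subtype
      N'.mkQ_surjective] at hp
    rcases hp with hp | hp
    · exact ih p hp
    · have hmax : (Module.annihilator A (M ⧸ N')).IsMaximal :=
        IsSimpleModule.annihilator_isMaximal
      rwa [← hmax.eq_of_le p.2.ne_top (Module.annihilator_le_of_mem_support hp)]

lemma length_ne_top_of_support_isMaximal [IsNoetherianRing A] [hN : Module.Finite A N]
    (h : ∀ p ∈ Module.support A N, p.asIdeal.IsMaximal) : Module.length A N ≠ ⊤ := by
  revert h
  induction hN using IsNoetherianRing.induction_on_isQuotientEquivQuotientPrime A with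
  | subsingleton N => simp
  | quotient N p e =>
    intro h
    have hp : p.asIdeal.IsMaximal := h p <| by
      rw [e.support_eq, Module.support_eq_zeroLocus, Ideal.annihilator_quotient]
      exact (PrimeSpectrum.mem_zeroLocus _ _).2 subset_rfl
    have : IsSimpleModule A (A ⧸ p.1) := isSimpleModule_iff_isCoatom.2 hp.out
    rw [e.length_eq, Module.length_eq_one]
    exact ENat.one_ne_top
  | exact N₁ N₂ N₃ f g hf hg hfg h₁ h₃ =>
    intro h
    rw [Module.support_of_exact hfg hf hg] at h
    rw [Module.length_eq_add_of_exact f g hf hg hfg]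
    exact WithTop.add_ne_top.2 ⟨h₁ fun p hp => h p (.inl hp), h₃ fun p hp => h p (.inr hp)⟩

/-- The elements of `L` form a multiplicity system on `N`, i.e. for finitely generated `N` over a
noetherian ring, `N / LN` has finite length. Expressed by the support of `N / LN`. -/
def IsMultiplicitySystem (L : List A) (N : Type v) [AddCommGroup N] [Module A N] : Prop :=
  ∀ p ∈ Module.support A N, (∀ a ∈ L, a ∈ p.asIdeal) → p.asIdeal.IsMaximal

namespace IsMultiplicitySystem

variable {a : A} {L : List A}

lemma of_subsingleton [Subsingleton N] : IsMultiplicitySystem L N := by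
  simp [IsMultiplicitySystem, Module.support_eq_empty (R := A) (M := N)]

lemma nil_iff [IsNoetherianRing A] [Module.Finite A N] :
    IsMultiplicitySystem ([] : List A) N ↔ Module.length A N ≠ ⊤ :=
  ⟨fun h => length_ne_top_of_support_isMaximal fun p hp => h p hp (by simp),
    fun h p hp _ =>
      isMaximal_of_mem_support_of_isFiniteLength (Module.length_ne_top_iff.1 h) p hp⟩

lemma congr (e : N₁ ≃ₗ[A] N₂) : IsMultiplicitySystem L N₁ ↔ IsMultiplicitySystem L N₂ := by
  rw [IsMultiplicitySystem, e.support_eq, IsMultiplicitySystem]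

lemma exact_iff {f : N₁ →ₗ[A] N₂} {g : N₂ →ₗ[A] N₃} (hf : Function.Injective f)
    (hg : Function.Surjective g) (hfg : Function.Exact f g) :
    IsMultiplicitySystem L N₂ ↔ IsMultiplicitySystem L N₁ ∧ IsMultiplicitySystem L N₃ := by
  simp only [IsMultiplicitySystem, Module.support_of_exact hfg hf hg, Set.mem_union, or_imp,
    forall_and]

lemma quotSMulTop_iff [Module.Finite A N] :
    IsMultiplicitySystem L (QuotSMulTop a N) ↔ IsMultiplicitySystem (a :: L) N := by
  simp only [IsMultiplicitySystem, Module.support_quotSMulTop, Set.mem_inter_iff,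
    PrimeSpectrum.mem_zeroLocus, Set.singleton_subset_iff, SetLike.mem_coe, List.forall_mem_cons,
    and_imp]

lemma torsionBy (h : IsMultiplicitySystem (a :: L) N) :
    IsMultiplicitySystem L (Submodule.torsionBy A N a) := by
  intro p hp hL
  refine h p (Module.support_subset_of_injective (Submodule.subtype _)
    (Submodule.subtype_injective _) hp) (List.forall_mem_cons.2 ⟨?_, hL⟩)
  exact Module.annihilator_le_of_mem_support hp
    (Module.mem_annihilator.2 fun m => Subtype.ext m.2)

end IsMultiplicitySystem

end MultiplicitySystem

namespace TwoPeriodicComplex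

section ConeHomology

variable {A : Type u} [CommRing A] (y : A) (X : TwoPeriodicComplex.{u, v} A)

/-- The inclusion of a complex into a cone. -/
abbrev coneInl : Hom X (cone y X) where
  even := LinearMap.inl A X.even X.odd
  odd := LinearMap.inl A X.odd X.even
  comm_even v := by simp
  comm_odd v := by simp

lemma homologyClass_coneInl_eq_zero (z : LinearMap.ker X.dEven) :
    (coneInl y X).mapHomology (X.homologyClass z) = 0 ↔
      X.homologyClass z ∈ y • (⊤ : Submodule A X.homology) := by
  rw [Hom.mapHomology_homologyClass, homologyClass_eq_zero, Submodule.mem_smul_pointwise_iff_exists]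
  constructor
  · rintro ⟨⟨a, b⟩, hab⟩
    obtain ⟨haz, hb⟩ : X.dOdd a + y • b = z ∧ -X.dEven b = 0 := Prod.mk.injEq _ _ _ _ ▸ hab
    refine ⟨X.homologyClass ⟨b, neg_eq_zero.1 hb⟩, trivial, ?_⟩
    rw [← map_smul, homologyClass_eq_iff]
    refine ⟨-a, (map_neg _ _).trans ?_⟩
    exact (neg_eq_of_add_eq_zero_right (by rw [← haz]; abel) : -X.dOdd a = y • b - z)
  · rintro ⟨w, -, hw⟩
    obtain ⟨w, rfl⟩ := X.homologyClass_surjective w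
    rw [eq_comm, ← map_smul, homologyClass_eq_iff] at hw
    obtain ⟨v, hv⟩ := hw
    refine ⟨(v, w), Prod.ext ?_ ?_⟩
    · change X.dOdd v + y • (w : X.even) = z
      rw [hv, Submodule.coe_smul, sub_add_cancel]
    · exact neg_eq_zero.2 w.2

/-- The map `H(X) / y H(X) → H(cone y X)`. -/
noncomputable def quotSMulTopHomologyToCone :
    QuotSMulTop y X.homology →ₗ[A] (cone y X).homology :=
  Submodule.liftQ _ (coneInl y X).mapHomology fun z hz => by
    obtain ⟨z, rfl⟩ := X.homologyClass_surjective z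
    exact (homologyClass_coneInl_eq_zero y X z).2 hz

lemma quotSMulTopHomologyToCone_injective :
    Function.Injective (quotSMulTopHomologyToCone y X) := by
  rw [← LinearMap.ker_eq_bot]
  refine Submodule.ker_liftQ_eq_bot _ _ _ fun z hz => ?_
  obtain ⟨z, rfl⟩ := X.homologyClass_surjective z
  exact (homologyClass_coneInl_eq_zero y X z).1 hz

/-- The projection of a cone to its shifted factor. The sign makes it a morphism. -/
abbrev coneSnd : Hom (cone y X) X.swap where
  even := LinearMap.snd A X.even X.odd
  odd := -LinearMap.snd A X.odd X.even
  comm_even v := by simp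
  comm_odd v := by simp

lemma shortExact_cone : ShortExact (coneInl y X) (coneSnd y X) where
  injective_even := LinearMap.inl_injective
  injective_odd := LinearMap.inl_injective
  exact_even := LinearMap.exact_iff.2 (LinearMap.range_inl ..).symm
  exact_odd := LinearMap.exact_iff.2 <| by rw [LinearMap.ker_neg, LinearMap.range_inl]
  surjective_even := LinearMap.snd_surjective
  surjective_odd v := ⟨(0, -v), by simp⟩

/-- The map `H(cone y X) → {z ∈ H(X[1]) | y z = 0}`. -/
noncomputable def coneToTorsionByHomology :
    (cone y X).homology →ₗ[A] Submodule.torsionBy A X.swap.homology y :=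
  (coneSnd y X).mapHomology.codRestrict _ fun z => by
    obtain ⟨⟨⟨a, b⟩, hz⟩, rfl⟩ := (cone y X).homologyClass_surjective z
    have hz' : X.dEven a + y • b = 0 := congrArg Prod.fst hz
    rw [Submodule.mem_torsionBy_iff, ← map_smul, ← map_smul, Hom.mapHomology_homologyClass,
      homologyClass_eq_zero]
    exact ⟨-a, (map_neg _ _).trans (neg_eq_of_add_eq_zero_right hz')⟩

lemma coneToTorsionByHomology_surjective :
    Function.Surjective (coneToTorsionByHomology y X) := by
  rintro ⟨z, hz⟩
  obtain ⟨⟨b, hb⟩, rfl⟩ := X.swap.homologyClass_surjective z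
  rw [Submodule.mem_torsionBy_iff, ← map_smul, homologyClass_eq_zero] at hz
  obtain ⟨a, ha⟩ := hz
  refine ⟨(cone y X).homologyClass ⟨(-a, b), Prod.ext ?_ (neg_eq_zero.2 hb)⟩, rfl⟩
  exact (congrArg (· + y • b) (map_neg X.dEven a)).trans
    (neg_add_eq_zero.2 ha)

lemma exact_coneToTorsionByHomology :
    Function.Exact (quotSMulTopHomologyToCone y X) (coneToTorsionByHomology y X) := by
  intro z
  have hker : coneToTorsionByHomology y X z = 0 ↔ (coneSnd y X).mapHomology z = 0 :=
    Subtype.ext_iff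
  rw [hker, (shortExact_cone y X).exact_mapHomology, Set.mem_range, Set.mem_range,
    (Submodule.mkQ_surjective (y • (⊤ : Submodule A X.homology))).exists]
  rfl

end ConeHomology

/-- A complex with finitely generated terms. -/
class IsFinite {A : Type u} [CommRing A] (X : TwoPeriodicComplex.{u, v} A) : Prop where
  finite_even : Module.Finite A X.even
  finite_odd : Module.Finite A X.odd

attribute [instance] IsFinite.finite_even IsFinite.finite_odd

section KoszulChar

variable {A : Type u} [CommRing A]

instance (N : Type v) [AddCommGroup N] [Module A N] [Module.Finite A N] : (of A N).IsFinite :=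
  ⟨inferInstance, inferInstance⟩

instance (X : TwoPeriodicComplex.{u, v} A) [X.IsFinite] : X.swap.IsFinite :=
  ⟨IsFinite.finite_odd, IsFinite.finite_even⟩

instance (y : A) (X : TwoPeriodicComplex.{u, v} A) [X.IsFinite] : (cone y X).IsFinite :=
  ⟨inferInstance, inferInstance⟩

lemma finiteHomology_koszul_iff [IsNoetherianRing A] (L : List A) (X : TwoPeriodicComplex.{u, v} A)
    [X.IsFinite] : (koszul L X).FiniteHomology ↔
      IsMultiplicitySystem L X.homology ∧ IsMultiplicitySystem L X.swap.homology := by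
  induction L generalizing X with
  | nil => rw [IsMultiplicitySystem.nil_iff, IsMultiplicitySystem.nil_iff]; rfl
  | cons a L ih =>
    rw [koszul, ih,
      IsMultiplicitySystem.exact_iff (quotSMulTopHomologyToCone_injective a X)
        (coneToTorsionByHomology_surjective a X) (exact_coneToTorsionByHomology a X),
      IsMultiplicitySystem.exact_iff (quotSMulTopHomologyToCone_injective a X.swap)
        (coneToTorsionByHomology_surjective a X.swap) (exact_coneToTorsionByHomology a X.swap),
      IsMultiplicitySystem.quotSMulTop_iff, IsMultiplicitySystem.quotSMulTop_iff]
    exact ⟨fun h => ⟨h.1.1, h.2.1⟩, fun h => ⟨⟨h.1, h.2.torsionBy⟩, h.2, h.1.torsionBy⟩⟩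

/-- The Koszul characteristic of a list of ring elements on a module. -/
noncomputable def koszulChar (L : List A) (N : Type v) [AddCommGroup N] [Module A N] : ℤ :=
  (koszul L (of A N)).eulerChar

variable {N N₁ N₂ N₃ : Type v} [AddCommGroup N] [Module A N] [AddCommGroup N₁] [Module A N₁]
  [AddCommGroup N₂] [Module A N₂] [AddCommGroup N₃] [Module A N₃]

/-- The module `N` as the even homology of the complex `of A N`. -/
noncomputable def homologyOfEquiv (N : Type v) [AddCommGroup N] [Module A N] :
    N ≃ₗ[A] (of A N).homology :=
  LinearEquiv.ofBijective
    ((of A N).homologyClass ∘ₗ LinearMap.id.codRestrict (LinearMap.ker (of A N).dEven) fun _ => rfl)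
    ⟨by
      refine (injective_iff_map_eq_zero _).2 fun z hz => ?_
      obtain ⟨w, hw⟩ := homologyClass_eq_zero.1 hz
      exact hw.symm,
     fun z => by
      obtain ⟨z, rfl⟩ := (of A N).homologyClass_surjective z
      exact ⟨z.1, rfl⟩⟩

instance : Subsingleton (of A N).swap.homology :=
  have : Subsingleton (LinearMap.ker (of A N).swap.dEven) :=
    Function.Injective.subsingleton (β := PUnit) Subtype.val_injective
  (homologyClass_surjective _).subsingleton

lemma finiteHomology_koszul_of [IsNoetherianRing A] [Module.Finite A N] {L : List A}
    (h : IsMultiplicitySystem L N) : (koszul L (of A N)).FiniteHomology :=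
  (finiteHomology_koszul_iff L _).2
    ⟨(IsMultiplicitySystem.congr (homologyOfEquiv N)).1 h, .of_subsingleton⟩

lemma eulerChar_koszul_of_subsingleton (L : List A) (X : TwoPeriodicComplex.{u, v} A)
    [Subsingleton X.even] [Subsingleton X.odd] : (koszul L X).eulerChar = 0 := by
  induction L generalizing X with
  | nil =>
    exact IsAcyclic.eulerChar_eq_zero (X := X)
      ⟨fun _ => ⟨fun _ => ⟨0, Subsingleton.elim _ _⟩, fun _ => Subsingleton.elim _ _⟩,
        fun _ => ⟨fun _ => ⟨0, Subsingleton.elim _ _⟩, fun _ => Subsingleton.elim _ _⟩⟩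
  | cons a _ ih => exact ih _

lemma koszulChar_of_subsingleton (L : List A) [Subsingleton N] : koszulChar L N = 0 :=
  eulerChar_koszul_of_subsingleton L _

/-- The morphism of complexes induced by a linear map. -/
abbrev ofMap (f : N₁ →ₗ[A] N₂) : Hom (of A N₁) (of A N₂) where
  even := f
  odd := LinearMap.id
  comm_even _ := rfl
  comm_odd _ := (map_zero f).symm

lemma shortExact_ofMap {f : N₁ →ₗ[A] N₂} {g : N₂ →ₗ[A] N₃} (hf : Function.Injective f)
    (hg : Function.Surjective g) (hfg : Function.Exact f g) :
    ShortExact (ofMap f) (ofMap g) where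
  injective_even := hf
  injective_odd := Function.injective_id
  exact_even := hfg
  exact_odd _ := ⟨fun _ => ⟨0, rfl⟩, fun _ => rfl⟩
  surjective_even := hg
  surjective_odd := Function.surjective_id

lemma koszulChar_nil (h : Module.length A N ≠ ⊤) :
    koszulChar ([] : List A) N = (Module.length A N).toNat := by
  have hzero : Module.length A PUnit.{v + 1} = 0 := Module.length_eq_zero
  rw [koszulChar, koszul,
    (finiteHomology_and_eulerChar_of_length_ne_top (X := of A N) h (by simp)).2, hzero]
  simp

/-- The submodules of `a`-torsion of isomorphic modules are isomorphic. -/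
def torsionByEquiv (a : A) (e : N₁ ≃ₗ[A] N₂) :
    Submodule.torsionBy A N₁ a ≃ₗ[A] Submodule.torsionBy A N₂ a :=
  e.ofSubmodules _ _ <| by
    ext z
    rw [Submodule.mem_map_equiv, Submodule.mem_torsionBy_iff, Submodule.mem_torsionBy_iff,
      ← map_smul, LinearEquiv.map_eq_zero_iff]

lemma torsionBy_subsingleton_of_notMem_prime {p : Ideal A} [p.IsPrime] {a : A} (e : N ≃ₗ[A] A ⧸ p)
    (ha : a ∉ p) : Subsingleton (Submodule.torsionBy A N a) := by
  refine subsingleton_of_forall_eq 0 fun ⟨z, hz⟩ => Subtype.ext (e.injective ?_)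
  have hez : a • e z = 0 := by
    rw [← map_smul, (Submodule.mem_torsionBy_iff _ _).1 hz, map_zero]
  rw [Algebra.smul_def, Ideal.Quotient.algebraMap_eq, mul_eq_zero,
    Ideal.Quotient.eq_zero_iff_mem] at hez
  rw [Submodule.coe_zero, map_zero]
  exact hez.resolve_left ha

lemma supportDim_homology_le (X : TwoPeriodicComplex.{u, v} A) :
    Module.supportDim A X.homology ≤ Module.supportDim A X.even :=
  (Module.supportDim_le_of_surjective _ X.homologyClass_surjective).trans
    (Module.supportDim_le_of_injective _ (Submodule.subtype_injective _))

variable [IsNoetherianRing A]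

lemma koszulChar_eq_add [Module.Finite A N₂] {L : List A} {f : N₁ →ₗ[A] N₂} {g : N₂ →ₗ[A] N₃}
    (hf : Function.Injective f) (hg : Function.Surjective g) (hfg : Function.Exact f g)
    (h : IsMultiplicitySystem L N₂) :
    koszulChar L N₂ = koszulChar L N₁ + koszulChar L N₃ := by
  obtain ⟨h₁, h₃⟩ := (IsMultiplicitySystem.exact_iff hf hg hfg).1 h
  have := Module.Finite.of_injective f hf
  have := Module.Finite.of_surjective g hg
  exact ((shortExact_ofMap hf hg hfg).koszul L).eulerChar_eq
    (finiteHomology_koszul_of h₁) (finiteHomology_koszul_of h₃)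

lemma koszulChar_congr [Module.Finite A N₂] {L : List A} (e : N₁ ≃ₗ[A] N₂)
    (h : IsMultiplicitySystem L N₂) : koszulChar L N₁ = koszulChar L N₂ := by
  have hexact : Function.Exact e.toLinearMap (0 : N₂ →ₗ[A] PUnit.{v + 1}) :=
    fun a => ⟨fun _ => e.surjective a, fun _ => rfl⟩
  rw [koszulChar_eq_add e.injective (fun _ => ⟨0, rfl⟩) hexact h,
    koszulChar_of_subsingleton L (N := PUnit), add_zero]

lemma eulerChar_koszul_cons (a : A) (L : List A) (X : TwoPeriodicComplex.{u, v} A) [X.IsFinite]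
    (ih : ∀ Y : TwoPeriodicComplex.{u, v} A, Y.IsFinite → (koszul L Y).FiniteHomology →
      (koszul L Y).eulerChar = koszulChar L Y.homology - koszulChar L Y.swap.homology)
    (hfin : (koszul (a :: L) X).FiniteHomology) :
    (koszul (a :: L) X).eulerChar =
      (koszulChar L (QuotSMulTop a X.homology) -
        koszulChar L (Submodule.torsionBy A X.homology a)) -
      (koszulChar L (QuotSMulTop a X.swap.homology) -
        koszulChar L (Submodule.torsionBy A X.swap.homology a)) := by
  obtain ⟨h₁, h₂⟩ := (finiteHomology_koszul_iff L (cone a X)).1 hfin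
  have hcone : (koszul (a :: L) X).eulerChar =
      koszulChar L (cone a X).homology - koszulChar L (cone a X.swap).homology :=
    ih (cone a X) inferInstance hfin
  rw [hcone,
    koszulChar_eq_add (quotSMulTopHomologyToCone_injective a X)
      (coneToTorsionByHomology_surjective a X) (exact_coneToTorsionByHomology a X) h₁,
    koszulChar_eq_add (quotSMulTopHomologyToCone_injective a X.swap)
      (coneToTorsionByHomology_surjective a X.swap) (exact_coneToTorsionByHomology a X.swap) h₂]
  ring

lemma koszulChar_cons_of_eulerChar_koszul [Module.Finite A N] {a : A} {L : List A}
    (ih : ∀ Y : TwoPeriodicComplex.{u, v} A, Y.IsFinite → (koszul L Y).FiniteHomology →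
      (koszul L Y).eulerChar = koszulChar L Y.homology - koszulChar L Y.swap.homology)
    (h : IsMultiplicitySystem (a :: L) N) :
    koszulChar (a :: L) N =
      koszulChar L (QuotSMulTop a N) - koszulChar L (Submodule.torsionBy A N a) := by
  have e := homologyOfEquiv (A := A) N
  have hH := (IsMultiplicitySystem.congr e).1 h
  rw [koszulChar, eulerChar_koszul_cons a L _ ih (finiteHomology_koszul_of h),
    koszulChar_of_subsingleton L (N := QuotSMulTop a (of A N).swap.homology),
    koszulChar_of_subsingleton L (N := Submodule.torsionBy A (of A N).swap.homology a),
    koszulChar_congr (QuotSMulTop.congr a e) (IsMultiplicitySystem.quotSMulTop_iff.2 hH),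
    koszulChar_congr (torsionByEquiv a e) hH.torsionBy, sub_self, sub_zero]

theorem eulerChar_koszul (L : List A) (X : TwoPeriodicComplex.{u, v} A) [X.IsFinite]
    (hfin : (koszul L X).FiniteHomology) :
    (koszul L X).eulerChar = koszulChar L X.homology - koszulChar L X.swap.homology := by
  induction L generalizing X with
  | nil =>
    replace hfin : X.FiniteHomology := hfin
    rw [koszulChar_nil hfin.1, koszulChar_nil hfin.2, koszul, eulerChar]
  | cons a L ih =>
    obtain ⟨h₁, h₂⟩ := (finiteHomology_koszul_iff _ X).1 hfin
    have ih' := fun Y (_ : IsFinite Y) => ih Y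
    rw [eulerChar_koszul_cons a L X ih' hfin, koszulChar_cons_of_eulerChar_koszul ih' h₁,
      koszulChar_cons_of_eulerChar_koszul ih' h₂]

lemma koszulChar_cons [Module.Finite A N] {a : A} {L : List A}
    (h : IsMultiplicitySystem (a :: L) N) :
    koszulChar (a :: L) N =
      koszulChar L (QuotSMulTop a N) - koszulChar L (Submodule.torsionBy A N a) :=
  koszulChar_cons_of_eulerChar_koszul (fun Y _ => eulerChar_koszul L Y) h

lemma koszulChar_cons_of_mem_annihilator [Module.Finite A N] {a : A} {L : List A}
    (h : IsMultiplicitySystem (a :: L) N) (ha : a ∈ Module.annihilator A N) :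
    koszulChar (a :: L) N = 0 := by
  have hbot : a • (⊤ : Submodule A N) = ⊥ :=
    (Submodule.eq_bot_iff _).2 fun z hz => by
      obtain ⟨z, -, rfl⟩ := (Submodule.mem_smul_pointwise_iff_exists _ _ _).1 hz
      exact Module.mem_annihilator.1 ha z
  have htop : Submodule.torsionBy A N a = ⊤ :=
    eq_top_iff.2 fun z _ => Module.mem_annihilator.1 ha z
  have equiv := Submodule.quotEquivOfEqBot _ hbot
  have hL := (IsMultiplicitySystem.congr equiv).1 (IsMultiplicitySystem.quotSMulTop_iff.2 h)
  rw [koszulChar_cons h, koszulChar_congr equiv hL,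
    koszulChar_congr (LinearEquiv.ofTop _ htop) hL, sub_self]

theorem koszulChar_eq_zero_of_supportDim_lt (L : List A) (N : Type v) [AddCommGroup N] [Module A N]
    [hfin : Module.Finite A N] (h : IsMultiplicitySystem L N)
    (hdim : Module.supportDim A N < (L.length : WithBot ℕ∞)) : koszulChar L N = 0 := by
  induction L generalizing N with
  | nil =>
    have : Subsingleton N :=
      (Module.supportDim_eq_bot_iff_subsingleton A N).1 (WithBot.lt_coe_bot.1 hdim)
    exact koszulChar_of_subsingleton _
  | cons a L ih =>
    revert h hdim
    induction hfin using IsNoetherianRing.induction_on_isQuotientEquivQuotientPrime A with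
    | subsingleton N => exact fun _ _ => koszulChar_of_subsingleton _
    | quotient N p e =>
      intro h hdim
      have hann : Module.annihilator A N = p.1 := by
        rw [e.annihilator_eq, Ideal.annihilator_quotient]
      by_cases ha : a ∈ p.1
      · exact koszulChar_cons_of_mem_annihilator h (hann ▸ ha)
      · have := torsionBy_subsingleton_of_notMem_prime e ha
        have hprime : ∀ q ∈ (Module.annihilator A N).minimalPrimes, a ∉ q := by
          rw [hann, Ideal.minimalPrimes_eq_subsingleton_self]
          rintro _ rfl
          exact ha
        have hlt := (Module.supportDim_quotSMulTop_succ_le_of_notMem_minimalPrimes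
          hprime).trans_lt hdim
        rw [List.length_cons, Nat.cast_succ] at hlt
        rw [koszulChar_cons h, ih _ (IsMultiplicitySystem.quotSMulTop_iff.2 h)
          (lt_of_add_lt_add_right hlt), koszulChar_of_subsingleton, sub_zero]
    | exact N₁ N₂ N₃ f g hf hg hfg h₁ h₃ =>
      intro h hdim
      obtain ⟨hN₁, hN₃⟩ := (IsMultiplicitySystem.exact_iff hf hg hfg).1 h
      rw [koszulChar_eq_add hf hg hfg h,
        h₁ hN₁ ((Module.supportDim_le_of_injective f hf).trans_lt hdim),
        h₃ hN₃ ((Module.supportDim_le_of_surjective g hg).trans_lt hdim), add_zero]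

theorem eulerChar_koszul_eq_zero_of_supportDim_lt (L : List A) (X : TwoPeriodicComplex.{u, v} A)
    [X.IsFinite] (hfin : (koszul L X).FiniteHomology)
    (hEven : Module.supportDim A X.even < (L.length : WithBot ℕ∞))
    (hOdd : Module.supportDim A X.odd < (L.length : WithBot ℕ∞)) :
    (koszul L X).eulerChar = 0 := by
  obtain ⟨h₁, h₂⟩ := (finiteHomology_koszul_iff L X).1 hfin
  rw [eulerChar_koszul L X hfin,
    koszulChar_eq_zero_of_supportDim_lt L _ h₁ (X.supportDim_homology_le.trans_lt hEven),
    koszulChar_eq_zero_of_supportDim_lt L _ h₂ (X.swap.supportDim_homology_le.trans_lt hOdd),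
    sub_self]

end KoszulChar

end TwoPeriodicComplex

/-! ### Multigraded Artin–Rees and reductions -/

lemma single_add_one_sub_single {ι : Type*} [DecidableEq ι] (i : ι) :
    Pi.single i 1 + (1 - Pi.single i 1) = (1 : ι → ℕ) :=
  add_tsub_cancel_of_le fun j => by rcases eq_or_ne j i with rfl | h <;> simp [*]

section MultiPow

variable {A ι : Type*} [CommRing A] [Fintype ι]

/-- The product of ideals `∏ i, I i ^ n i`. -/
def multiPow (I : ι → Ideal A) (n : ι → ℕ) : Ideal A := ∏ i, I i ^ n i

variable (I : ι → Ideal A)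

lemma multiPow_add (m n : ι → ℕ) : multiPow I (m + n) = multiPow I m * multiPow I n := by
  simp only [multiPow, Pi.add_apply, pow_add, Finset.prod_mul_distrib]

lemma multiPow_zero : multiPow I 0 = ⊤ := by
  simp [multiPow]

lemma multiPow_nsmul (k : ℕ) (n : ι → ℕ) : multiPow I (k • n) = multiPow I n ^ k := by
  simp only [multiPow, Pi.smul_apply, smul_eq_mul, Finset.prod_pow, pow_mul']

lemma multiPow_antitone : Antitone (multiPow I) := by
  intro m n h
  obtain ⟨l, rfl⟩ := exists_add_of_le h
  exact (multiPow_add I m l).trans_le Ideal.mul_le_left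

lemma multiPow_single [DecidableEq ι] (i : ι) (k : ℕ) :
    multiPow I (Pi.single i k) = I i ^ k := by
  rw [multiPow, Finset.prod_eq_single i (fun j _ hj => by simp [Pi.single_eq_of_ne hj]) (by simp),
    Pi.single_eq_same]

/-- The multi-Rees algebra of a family of ideals, inside the polynomial ring. -/
def multiRees : Subalgebra A (MvPolynomial ι A) where
  carrier := {f | ∀ n : ι →₀ ℕ, f.coeff n ∈ multiPow I n}
  mul_mem' {f g} hf hg n := by
    classical
    rw [MvPolynomial.coeff_mul]
    refine sum_mem fun p hp => ?_
    rw [← Finset.HasAntidiagonal.mem_antidiagonal.1 hp, Finsupp.coe_add, multiPow_add]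
    exact Ideal.mul_mem_mul (hf _) (hg _)
  add_mem' {f g} hf hg n := by
    rw [MvPolynomial.coeff_add]
    exact add_mem (hf n) (hg n)
  algebraMap_mem' r n := by
    classical
    rw [MvPolynomial.algebraMap_eq, MvPolynomial.coeff_C]
    split_ifs with h
    · simp [← h, multiPow_zero]
    · exact zero_mem _

variable {I}

lemma coeff_mem_of_mem_multiRees {f : MvPolynomial ι A} (hf : f ∈ multiRees I) (n : ι →₀ ℕ) :
    f.coeff n ∈ multiPow I n := hf n

lemma monomial_mem_multiRees {n : ι →₀ ℕ} {a : A} (ha : a ∈ multiPow I n) :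
    MvPolynomial.monomial n a ∈ multiRees I := by
  classical
  intro m
  rw [MvPolynomial.coeff_monomial]
  split_ifs with h
  · rwa [← h]
  · exact zero_mem _

lemma multiPow_le_comap_monomial {S : Subalgebra A (MvPolynomial ι A)}
    (hS : ∀ i, I i ≤ (Subalgebra.toSubmodule S).comap (MvPolynomial.monomial (Finsupp.single i 1)))
    (n : ι →₀ ℕ) :
    multiPow I n ≤ (Subalgebra.toSubmodule S).comap (MvPolynomial.monomial n) := by
  have mul_le {m n : ι →₀ ℕ} {P Q : Ideal A}
      (hP : P ≤ (Subalgebra.toSubmodule S).comap (MvPolynomial.monomial m))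
      (hQ : Q ≤ (Subalgebra.toSubmodule S).comap (MvPolynomial.monomial n)) :
      P * Q ≤ (Subalgebra.toSubmodule S).comap (MvPolynomial.monomial (m + n)) := by
    refine Ideal.mul_le.2 fun a ha b hb => ?_
    rw [Submodule.mem_comap, ← MvPolynomial.monomial_mul]
    exact S.mul_mem (hP ha) (hQ hb)
  have one_le : (1 : Ideal A) ≤ (Subalgebra.toSubmodule S).comap (MvPolynomial.monomial 0) :=
    fun a _ => S.algebraMap_mem a
  have pow_le (i : ι) (k : ℕ) :
      I i ^ k ≤ (Subalgebra.toSubmodule S).comap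
        (MvPolynomial.monomial (Finsupp.single i k)) := by
    induction k with
    | zero => simpa using one_le
    | succ k ih =>
      rw [pow_succ, Finsupp.single_add]
      exact mul_le ih (hS i)
  have prod_le (s : Finset ι) : ∏ i ∈ s, I i ^ n i ≤ (Subalgebra.toSubmodule S).comap
      (MvPolynomial.monomial (∑ i ∈ s, Finsupp.single i (n i))) := by
    induction s using Finset.cons_induction with
    | empty => exact one_le
    | cons i s hi ih =>
      rw [Finset.prod_cons, Finset.sum_cons]
      exact mul_le (pow_le i _) ih
  simpa only [Finsupp.univ_sum_single, multiPow] using prod_le Finset.univ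

lemma multiRees_fg [IsNoetherianRing A] : (multiRees I).FG := by
  classical
  have hfg (i : ι) : ∃ B : Finset A, Ideal.span (B : Set A) = I i := IsNoetherian.noetherian (I i)
  choose B hB using hfg
  let gen : Finset (MvPolynomial ι A) :=
    Finset.univ.biUnion fun i => (B i).image (MvPolynomial.monomial (Finsupp.single i 1))
  have mem_gen {i : ι} {a : A} (ha : a ∈ B i) :
      MvPolynomial.monomial (Finsupp.single i 1) a ∈ gen :=
    Finset.mem_biUnion.2 ⟨i, Finset.mem_univ i, Finset.mem_image_of_mem _ ha⟩
  refine ⟨gen, le_antisymm (Algebra.adjoin_le fun f hf => ?_) fun f hf => ?_⟩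
  · obtain ⟨i, -, hf⟩ := Finset.mem_biUnion.1 hf
    obtain ⟨a, ha, rfl⟩ := Finset.mem_image.1 hf
    refine monomial_mem_multiRees ?_
    rw [Finsupp.single_eq_pi_single, multiPow_single, pow_one, ← hB i]
    exact Ideal.subset_span ha
  · rw [f.as_sum]
    have hI (i : ι) : I i ≤ (Subalgebra.toSubmodule (Algebra.adjoin A (gen : Set _))).comap
        (MvPolynomial.monomial (Finsupp.single i 1)) := by
      rw [← hB i, Ideal.span, Submodule.span_le]
      exact fun a ha => Algebra.subset_adjoin (mem_gen ha)
    exact sum_mem fun n _ => multiPow_le_comap_monomial hI n (hf n)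

instance [IsNoetherianRing A] : IsNoetherianRing (multiRees I) := by
  have : Algebra.FiniteType A (multiRees I) := (multiRees I).fg_iff_finiteType.1 multiRees_fg
  exact Algebra.FiniteType.isNoetherianRing A _

end MultiPow

section ArtinRees

variable {A ι : Type*} [CommRing A] [Fintype ι] {I : ι → Ideal A}

/-- The vectors of homogeneous elements of the multi-Rees algebra whose coefficients in degree `n`
form an element of `G n`. -/
def homogeneousVectors {κ : Type*} (I : ι → Ideal A) (G : (ι → ℕ) → Submodule A (κ → A)) :
    Set (κ → multiRees I) :=
  {w | ∃ (n : ι →₀ ℕ), ∃ v ∈ G n, ∀ a, (w a : MvPolynomial ι A) = MvPolynomial.monomial n (v a)}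

/-- The vector of coefficients in degree `n`. -/
noncomputable def coeffVector (κ : Type*) (I : ι → Ideal A) (n : ι →₀ ℕ) :
    (κ → multiRees I) →ₗ[A] κ → A :=
  ((MvPolynomial.lcoeff A n) ∘ₗ (multiRees I).val.toLinearMap).compLeft κ

lemma coeffVector_smul_mem {κ : Type*} {G : (ι → ℕ) → Submodule A (κ → A)}
    (hsmul : ∀ n m, multiPow I m • G n ≤ G (n + m)) {n d m : ι →₀ ℕ} (hd : d ≤ n) (f : multiRees I)
    {w : κ → multiRees I} {v : κ → A} (hv : v ∈ G d)
    (hw : ∀ a, (w a : MvPolynomial ι A) = MvPolynomial.monomial d (v a)) :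
    coeffVector κ I (n + m) (f • w) ∈ multiPow I m • G n := by
  have hcoeff : coeffVector κ I (n + m) (f • w) =
      (f : MvPolynomial ι A).coeff (m + (n - d)) • v := by
    ext a
    have hle : d ≤ n + m := hd.trans le_self_add
    have : coeffVector κ I (n + m) (f • w) a =
      ((f : MvPolynomial ι A) * (w a : MvPolynomial ι A)).coeff (n + m) := rfl
    rw [this, hw a, MvPolynomial.coeff_mul_monomial', if_pos hle, ← tsub_add_eq_add_tsub hd,
      add_comm m]
    rfl
  have hmul := coeff_mem_of_mem_multiRees f.2 (m + (n - d))
  have hG : multiPow I ⇑(n - d) • G d ≤ G n := by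
    refine (hsmul _ _).trans_eq (congrArg G ?_)
    rw [← Finsupp.coe_add, add_tsub_cancel_of_le hd]
  rw [Finsupp.coe_add, multiPow_add] at hmul
  rw [hcoeff]
  refine Submodule.smul_mono le_rfl hG ?_
  rw [← Submodule.mul_smul]
  exact Submodule.smul_mem_smul hmul hv

variable [IsNoetherianRing A]

lemma artinRees_pi {κ : Type*} [Finite κ] {G : (ι → ℕ) → Submodule A (κ → A)}
    (hle : ∀ n, ∀ v ∈ G n, ∀ a, v a ∈ multiPow I n)
    (hsmul : ∀ n m, multiPow I m • G n ≤ G (n + m)) :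
    ∀ᶠ n : ι → ℕ in Filter.atTop, ∀ m, G (n + m) ≤ multiPow I m • G n := by
  classical
  obtain ⟨D, hD, hspan⟩ := (Submodule.fg_span_iff_fg_span_finset_subset _).1
    (IsNoetherian.noetherian (Submodule.span (multiRees I) (homogeneousVectors I G)))
  have hD' (w : D) := hD w.2
  choose deg vec hvec hmonomial using hD'
  filter_upwards [Filter.eventually_all.2 fun w : D => Filter.eventually_ge_atTop (⇑(deg w))]
    with n hn m v hv
  obtain ⟨n, rfl⟩ := Finsupp.equivFunOnFinite.surjective n
  obtain ⟨m, rfl⟩ := Finsupp.equivFunOnFinite.surjective m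
  let w : κ → multiRees I := fun a =>
    ⟨MvPolynomial.monomial (n + m) (v a), monomial_mem_multiRees (hle _ v hv a)⟩
  have hw : coeffVector κ I (n + m) w = v :=
    funext fun a => (MvPolynomial.coeff_monomial _ _ _).trans (if_pos rfl)
  have hspan_mem : w ∈ Submodule.span (multiRees I) (D : Set (κ → multiRees I)) :=
    hspan ▸ Submodule.subset_span ⟨n + m, v, hv, fun _ => rfl⟩
  obtain ⟨f, hf, hsum⟩ := Submodule.mem_span_set.1 hspan_mem
  rw [← hw, ← hsum, Finsupp.sum, map_sum]
  exact sum_mem fun w hw =>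
    coeffVector_smul_mem hsmul (hn ⟨w, hf hw⟩) (f w) (hvec ⟨w, hf hw⟩) (hmonomial ⟨w, hf hw⟩)

theorem artinRees {T : Type*} [AddCommGroup T] [Module A T] [Module.Finite A T]
    {G : (ι → ℕ) → Submodule A T} (hle : ∀ n, G n ≤ multiPow I n • ⊤)
    (hsmul : ∀ n m, multiPow I m • G n ≤ G (n + m)) :
    ∀ᶠ n : ι → ℕ in Filter.atTop, ∀ m, G (n + m) ≤ multiPow I m • G n := by
  obtain ⟨r, π, hπ⟩ := Module.Finite.exists_fin' A T
  have htop : (⊤ : Submodule A T) = Submodule.map π ⊤ := by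
    rw [Submodule.map_top, LinearMap.range_eq_top.2 hπ]
  let G' : (ι → ℕ) → Submodule A (Fin r → A) := fun n =>
    multiPow I n • ⊤ ⊓ (G n).comap π
  have hmap (n) : (G' n).map π = G n := by
    rw [← Submodule.map_inf_eq_map_inf_comap, Submodule.map_smul'', ← htop, inf_eq_right.2 (hle n)]
  have hG' (n m) : multiPow I m • G' n ≤ G' (n + m) := by
    refine le_inf ?_ (Submodule.map_le_iff_le_comap.1 ?_)
    · rw [add_comm, multiPow_add, Submodule.mul_smul]
      exact Submodule.smul_mono le_rfl inf_le_left
    · rw [Submodule.map_smul'', hmap]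
      exact hsmul n m
  have hcoord (n) (v) (hv : v ∈ G' n) (a) : v a ∈ multiPow I n := by
    have := Submodule.mem_map_of_mem (f := LinearMap.proj (R := A) (φ := fun _ => A) a) hv.1
    rw [Submodule.map_smul''] at this
    exact Submodule.smul_le.2 (fun p hp q _ => Ideal.mul_mem_right q _ hp) this
  filter_upwards [artinRees_pi hcoord hG'] with n hn m
  rw [← hmap, ← hmap, ← Submodule.map_smul'']
  exact Submodule.map_mono (hn m)

end ArtinRees

section Reduction

variable {A : Type*} [CommRing A] {N Q Q' K : Ideal A}

/-- `Q` is a reduction of `K` modulo `N`. -/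
def IsReductionMod (N Q K : Ideal A) : Prop := ∃ m : ℕ, K ^ (m + 1) ≤ Q * K ^ m ⊔ N

lemma IsReductionMod.trans (hK : Q' ≤ K) (h : IsReductionMod N Q Q') (h' : IsReductionMod N Q' K) :
    IsReductionMod N Q K := by
  obtain ⟨m, hm⟩ := h
  obtain ⟨l, hl⟩ := h'
  have pow_le (j : ℕ) : K ^ (l + j) ≤ Q' ^ j * K ^ l ⊔ N := by
    induction j with
    | zero => simp
    | succ j ih =>
      calc K ^ (l + (j + 1)) = K * K ^ (l + j) := by ring
        _ ≤ K * (Q' ^ j * K ^ l ⊔ N) := Ideal.mul_mono_right ih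
        _ = Q' ^ j * K ^ (l + 1) ⊔ K * N := by rw [Ideal.mul_sup]; ring_nf
        _ ≤ Q' ^ j * (Q' * K ^ l ⊔ N) ⊔ N :=
          sup_le_sup (Ideal.mul_mono_right hl) Ideal.mul_le_right
        _ ≤ Q' ^ (j + 1) * K ^ l ⊔ N := by
          rw [Ideal.mul_sup, ← mul_assoc, ← pow_succ]
          exact sup_le (sup_le_sup_left Ideal.mul_le_right _) le_sup_right
  refine ⟨l + m, ?_⟩
  calc K ^ (l + m + 1) ≤ Q' ^ (m + 1) * K ^ l ⊔ N := pow_le (m + 1)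
    _ ≤ (Q * Q' ^ m ⊔ N) * K ^ l ⊔ N := sup_le_sup_right (Ideal.mul_mono_left hm) _
    _ ≤ Q * K ^ (l + m) ⊔ N := by
      rw [Ideal.sup_mul, mul_assoc, add_comm l, pow_add]
      exact sup_le (sup_le_sup (Ideal.mul_mono_right (Ideal.mul_mono_left
        (Ideal.pow_right_mono hK m))) Ideal.mul_le_left) le_sup_right

lemma isReductionMod_sup_span_singleton {a : A} {n : ℕ}
    (h : a ^ (n + 1) ∈ Q * (Q ⊔ Ideal.span {a}) ^ n ⊔ N) :
    IsReductionMod N Q (Q ⊔ Ideal.span {a}) := by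
  set K := Q ⊔ Ideal.span {a}
  have pow_le (j : ℕ) : K ^ (j + 1) ≤ Q * K ^ j ⊔ Ideal.span {a ^ (j + 1)} := by
    induction j with
    | zero => simp [K]
    | succ j ih =>
      calc K ^ (j + 1 + 1) = Q * K ^ (j + 1) ⊔ Ideal.span {a} * K ^ (j + 1) := by
            rw [pow_succ' K (j + 1), Ideal.sup_mul]
        _ ≤ Q * K ^ (j + 1) ⊔ Ideal.span {a} * (Q * K ^ j ⊔ Ideal.span {a ^ (j + 1)}) :=
          sup_le_sup_left (Ideal.mul_mono_right ih) _
        _ ≤ _ := by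
          rw [Ideal.mul_sup, Ideal.span_singleton_mul_span_singleton, ← pow_succ',
            mul_left_comm, ← sup_assoc, pow_succ' K]
          exact sup_le_sup_right (sup_le le_rfl
            (Ideal.mul_mono_right (Ideal.mul_mono_left le_sup_right))) _
  exact ⟨n, (pow_le n).trans (sup_le le_sup_left ((Ideal.span_singleton_le_iff_mem _).2 h))⟩

variable {W M : Type*} [AddCommGroup W] [Module A W] [Module.Finite A W] [AddCommGroup M]
  [Module A M] [Module.Finite A M]

lemma exists_pow_mem_of_smul_mem {a : A} (ha : ∀ w : W, a • w ∈ Q • (⊤ : Submodule A W)) :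
    ∃ n : ℕ, a ^ (n + 1) ∈ Q * (Q ⊔ Ideal.span {a}) ^ n ⊔ Module.annihilator A W := by
  set K := Q ⊔ Ideal.span {a}
  obtain ⟨p, hp, -, hcoeff, hzero⟩ :=
    LinearMap.exists_monic_and_natDegree_eq_and_coeff_mem_pow_and_aeval_eq_zero A
      (algebraMap A (Module.End A W) a) Q (by rintro _ ⟨w, rfl⟩; exact ha w)
  have heval : p.eval a ∈ Module.annihilator A W := by
    rw [Polynomial.aeval_algebraMap_apply] at hzero
    exact Module.mem_annihilator.2 fun w => LinearMap.congr_fun hzero w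
  rw [Polynomial.eval_eq_sum_range, Finset.sum_range_succ, hp.coeff_natDegree, one_mul] at heval
  have hlower : ∑ k ∈ Finset.range p.natDegree, p.coeff k * a ^ k * a ∈
      Q * K ^ p.natDegree := by
    refine sum_mem fun k hk => ?_
    obtain ⟨j, hj⟩ := Nat.exists_eq_add_of_lt (Finset.mem_range.1 hk)
    have hdeg : p.natDegree - k = j + 1 := by omega
    have hck := hcoeff k
    rw [hdeg] at hck
    have haK : a ∈ K := Ideal.mem_sup_right (Ideal.mem_span_singleton_self a)
    have hle : Q ^ (j + 1) * K ^ (k + 1) ≤ Q * K ^ p.natDegree :=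
      calc Q ^ (j + 1) * K ^ (k + 1) = Q * (Q ^ j * K ^ (k + 1)) := by ring
        _ ≤ Q * (K ^ j * K ^ (k + 1)) :=
          Ideal.mul_mono_right (Ideal.mul_mono_left (Ideal.pow_right_mono le_sup_left j))
        _ = Q * K ^ p.natDegree := by rw [← pow_add, hj]; ring_nf
    rw [mul_assoc, ← pow_succ]
    exact hle (Ideal.mul_mem_mul hck (Ideal.pow_mem_pow haK (k + 1)))
  refine ⟨p.natDegree, ?_⟩
  have hsplit : a ^ (p.natDegree + 1) =
      -(∑ k ∈ Finset.range p.natDegree, p.coeff k * a ^ k * a) +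
        a * (∑ k ∈ Finset.range p.natDegree, p.coeff k * a ^ k + a ^ p.natDegree) := by
    rw [← Finset.sum_mul]
    ring
  rw [hsplit]
  exact Submodule.add_mem_sup (neg_mem hlower) (Ideal.mul_mem_left _ a heval)

lemma isReductionMod_annihilator_of_smul_le [IsNoetherianRing A] (hQ : Q ≤ K)
    (h : K • (⊤ : Submodule A W) ≤ Q • ⊤) : IsReductionMod (Module.annihilator A W) Q K := by
  classical
  have sup_span (B : Finset A) (hB : (B : Set A) ⊆ K) :
      IsReductionMod (Module.annihilator A W) Q (Q ⊔ Ideal.span B) := by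
    induction B using Finset.induction_on with
    | empty => exact ⟨0, by simp⟩
    | insert a B _ ih =>
      rw [Finset.coe_insert, Set.insert_subset_iff] at hB
      rw [Finset.coe_insert, Ideal.span_insert, sup_comm (Ideal.span {a}), ← sup_assoc]
      obtain ⟨n, hn⟩ := exists_pow_mem_of_smul_mem (Q := Q ⊔ Ideal.span B) (a := a) fun w =>
        Submodule.smul_mono_left le_sup_left (h (Submodule.smul_mem_smul hB.1 trivial))
      exact (ih hB.2).trans le_sup_left (isReductionMod_sup_span_singleton hn)
  obtain ⟨B, rfl⟩ := IsNoetherian.noetherian K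
  simpa only [sup_eq_right.2 hQ] using sup_span B Ideal.subset_span

lemma isReductionMod_annihilator_of_smul_pow_le [IsNoetherianRing A] (hQ : Q ≤ K) {n : ℕ}
    (h : K • K ^ n • (⊤ : Submodule A M) ≤ Q • K ^ n • (⊤ : Submodule A M)) :
    IsReductionMod (Module.annihilator A M) Q K := by
  set W : Submodule A M := K ^ n • ⊤
  have hKW : K • (⊤ : Submodule A W) ≤ Q • ⊤ := by
    rw [← Submodule.map_le_map_iff_of_injective W.injective_subtype, Submodule.map_smul'',
      Submodule.map_smul'', Submodule.map_subtype_top]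
    exact h
  obtain ⟨m, hm⟩ := isReductionMod_annihilator_of_smul_le hQ hKW
  have hann : Module.annihilator A W * K ^ n ≤ Module.annihilator A M := by
    refine Ideal.mul_le.2 fun a ha b hb => Module.mem_annihilator.2 fun v => ?_
    rw [mul_smul]
    exact congrArg Subtype.val
      (Module.mem_annihilator.1 ha ⟨b • v, Submodule.smul_mem_smul hb trivial⟩)
  refine ⟨m + n, ?_⟩
  calc K ^ (m + n + 1) = K ^ (m + 1) * K ^ n := by ring
    _ ≤ (Q * K ^ m ⊔ Module.annihilator A W) * K ^ n := Ideal.mul_mono_left hm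
    _ ≤ Q * K ^ (m + n) ⊔ Module.annihilator A M := by
      rw [Ideal.sup_mul, mul_assoc, ← pow_add]
      exact sup_le_sup_left hann _

end Reduction

/-! ### Multi-filtered complexes -/

section Prod

variable {A N P : Type*} [CommRing A] [AddCommGroup N] [Module A N] [AddCommGroup P] [Module A P]

lemma ideal_smul_prod (K : Ideal A) (U : Submodule A N) (V : Submodule A P) :
    K • U.prod V = (K • U).prod (K • V) := by
  simp only [LinearMap.prod_eq_sup_map, Submodule.map_smul'', Submodule.smul_sup]

end Prod

namespace TwoPeriodicComplex

section Annihilator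

variable {A : Type u} [CommRing A] (X : TwoPeriodicComplex.{u, v} A)

/-- The annihilator of the terms of a complex. -/
def annihilator : Ideal A := Module.annihilator A X.even ⊓ Module.annihilator A X.odd

lemma annihilator_swap : X.swap.annihilator = X.annihilator := inf_comm _ _

lemma annihilator_cone (y : A) : (cone y X).annihilator = X.annihilator := by
  rw [annihilator, Module.annihilator_prod, Module.annihilator_prod,
    inf_comm (Module.annihilator A X.odd), inf_idem, annihilator]

lemma annihilator_koszul (L : List A) : (koszul L X).annihilator = X.annihilator := by
  induction L generalizing X with
  | nil => rfl
  | cons a _ ih => rw [koszul, ih, annihilator_cone]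

lemma annihilator_of (M : Type v) [AddCommGroup M] [Module A M] :
    (of A M).annihilator = Module.annihilator A M :=
  inf_eq_left.2 fun _ _ => Module.mem_annihilator.2 fun _ => rfl

instance [X.IsFinite] (L : List A) : (koszul L X).IsFinite := by
  induction L generalizing X with
  | nil => assumption
  | cons a _ ih => exact ih _

end Annihilator

variable {A : Type u} [CommRing A] {ι : Type*} [Fintype ι]

/-- A family of subcomplexes of `X` indexed by `ι → ℕ` on which the powers of the ideals `I i` act
with the expected shift. -/
structure MultiFiltration (I : ι → Ideal A) (X : TwoPeriodicComplex.{u, v} A) where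
  sub : (ι → ℕ) → Subcomplex X
  smul_mem_even : ∀ {n m a v}, a ∈ multiPow I m → v ∈ (sub n).even → a • v ∈ (sub (n + m)).even
  smul_mem_odd : ∀ {n m a v}, a ∈ multiPow I m → v ∈ (sub n).odd → a • v ∈ (sub (n + m)).odd

namespace MultiFiltration

variable {I : ι → Ideal A} {X : TwoPeriodicComplex.{u, v} A}

/-- A filtration with the two parities exchanged. -/
abbrev swap (F : MultiFiltration I X) : MultiFiltration I X.swap where
  sub n := (F.sub n).swap
  smul_mem_even := F.smul_mem_odd
  smul_mem_odd := F.smul_mem_even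

section HomologyAnnihilator

variable (F : MultiFiltration I X)

/-- The elements of `A` such that, for all `n`, multiplication by them turns the even cycles in
degree `n` into boundaries from degree `n + m`. -/
def evenHomologyAnnihilator (m : ι → ℕ) : Ideal A :=
  ⨅ n, ((F.sub (n + m)).odd.map X.dOdd).colon
    (LinearMap.ker X.dEven ⊓ (F.sub n).even : Submodule A X.even)

lemma mem_evenHomologyAnnihilator {m : ι → ℕ} {a : A} : a ∈ F.evenHomologyAnnihilator m ↔
    ∀ n, ∀ v ∈ (F.sub n).even, X.dEven v = 0 → ∃ w ∈ (F.sub (n + m)).odd, X.dOdd w = a • v := by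
  simp only [evenHomologyAnnihilator, Ideal.mem_iInf, Submodule.mem_colon, SetLike.mem_coe,
    Submodule.mem_inf, LinearMap.mem_ker, Submodule.mem_map]
  exact ⟨fun h n v hv hz => h n v ⟨hz, hv⟩, fun h n v hv => h n v hv.2 hv.1⟩

/-- The elements of `A` that annihilate the homology of the filtration, in both parities, with a
shift by `m`. -/
def homologyAnnihilator (m : ι → ℕ) : Ideal A :=
  F.evenHomologyAnnihilator m ⊓ F.swap.evenHomologyAnnihilator m

lemma evenHomologyAnnihilator_mul_multiPow_le (m l : ι → ℕ) :
    F.evenHomologyAnnihilator m * multiPow I l ≤ F.evenHomologyAnnihilator (m + l) := by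
  refine Ideal.mul_le.2 fun a ha b hb => F.mem_evenHomologyAnnihilator.2 fun n v hv hz => ?_
  obtain ⟨w, hw, hwv⟩ := F.mem_evenHomologyAnnihilator.1 ha n v hv hz
  exact ⟨b • w, add_assoc n m l ▸ F.smul_mem_odd hb hw, by rw [map_smul, hwv, mul_comm, mul_smul]⟩

lemma homologyAnnihilator_mul_multiPow_le (m l : ι → ℕ) :
    F.homologyAnnihilator m * multiPow I l ≤ F.homologyAnnihilator (m + l) :=
  le_inf ((Ideal.mul_mono_left inf_le_left).trans (F.evenHomologyAnnihilator_mul_multiPow_le m l))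
    ((Ideal.mul_mono_left inf_le_right).trans (F.swap.evenHomologyAnnihilator_mul_multiPow_le m l))

lemma annihilator_le_evenHomologyAnnihilator (m : ι → ℕ) :
    X.annihilator ≤ F.evenHomologyAnnihilator m := fun a ha =>
  F.mem_evenHomologyAnnihilator.2 fun _ v _ _ =>
    ⟨0, zero_mem _, by rw [map_zero, Module.mem_annihilator.1 ha.1 v]⟩

lemma annihilator_le_homologyAnnihilator (m : ι → ℕ) :
    X.annihilator ≤ F.homologyAnnihilator m :=
  le_inf (F.annihilator_le_evenHomologyAnnihilator m)
    (X.annihilator_swap.symm.trans_le (F.swap.annihilator_le_evenHomologyAnnihilator m))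

end HomologyAnnihilator

/-- `F` is cofinal with the adic filtration of `X`, and contained in it. -/
structure IsAdic (F : MultiFiltration I X) : Prop where
  even_le : ∀ n, (F.sub n).even ≤ multiPow I n • ⊤
  odd_le : ∀ n, (F.sub n).odd ≤ multiPow I n • ⊤
  exists_le_even : ∀ n, ∃ m, multiPow I m • ⊤ ≤ (F.sub n).even
  exists_le_odd : ∀ n, ∃ m, multiPow I m • ⊤ ≤ (F.sub n).odd

section Acyclic

variable [IsNoetherianRing A] {F : MultiFiltration I X}

lemma eventually_exact [Module.Finite A X.even] {m : ι → ℕ}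
    (hle : ∀ n, (F.sub n).even ≤ multiPow I n • ⊤)
    (hm : multiPow I m ≤ F.evenHomologyAnnihilator m) :
    ∀ᶠ n in Filter.atTop,
      Function.Exact (F.sub n).toComplex.dOdd (F.sub n).toComplex.dEven := by
  have hsmul (n l : ι → ℕ) : multiPow I l • (LinearMap.ker X.dEven ⊓ (F.sub n).even) ≤
      LinearMap.ker X.dEven ⊓ (F.sub (n + l)).even :=
    Submodule.smul_le.2 fun a ha v hv => ⟨Submodule.smul_mem _ a hv.1, F.smul_mem_even ha hv.2⟩
  obtain ⟨N, hN⟩ := Filter.eventually_atTop.1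
    (artinRees (fun n => inf_le_right.trans (hle n)) hsmul)
  filter_upwards [Filter.eventually_ge_atTop (N + m)] with n hn
  obtain ⟨n, rfl⟩ := le_iff_exists_add'.1 (le_add_self.trans hn)
  intro v
  refine ⟨fun hv => ?_, ?_⟩
  · have hcycles : LinearMap.ker X.dEven ⊓ (F.sub (n + m)).even ≤
        (F.sub (n + m)).odd.map X.dOdd :=
      (hN n (le_of_add_le_add_right hn) m).trans <| Submodule.smul_le.2 fun a ha z hz =>
        F.mem_evenHomologyAnnihilator.1 (hm ha) n z hz.2 hz.1
    obtain ⟨w, hw, hwv⟩ := hcycles ⟨congrArg Subtype.val hv, v.2⟩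
    exact ⟨⟨w, hw⟩, Subtype.ext hwv⟩
  · rintro ⟨w, rfl⟩
    exact (F.sub (n + m)).toComplex.dEven_dOdd w

theorem IsAdic.eventually_isAcyclic [X.IsFinite] [DecidableEq ι] (hF : F.IsAdic) {Q : ι → Ideal A}
    (hQ : ∀ i, Q i ≤ F.homologyAnnihilator (Pi.single i 1))
    (hred : IsReductionMod X.annihilator (∑ i, Q i * multiPow I (1 - Pi.single i 1))
      (multiPow I 1)) :
    ∀ᶠ n in Filter.atTop, (F.sub n).toComplex.IsAcyclic := by
  obtain ⟨m, hm⟩ := hred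
  have hsum : ∑ i, Q i * multiPow I (1 - Pi.single i 1) ≤ F.homologyAnnihilator 1 := by
    refine Finset.sum_induction _ (· ≤ F.homologyAnnihilator 1) (fun _ _ => sup_le) bot_le
      fun i _ => ?_
    refine (Ideal.mul_mono_left (hQ i)).trans ?_
    refine (F.homologyAnnihilator_mul_multiPow_le _ _).trans_eq ?_
    rw [single_add_one_sub_single]
  have hann : multiPow I ((m + 1) • 1) ≤ F.homologyAnnihilator ((m + 1) • 1) := by
    rw [multiPow_nsmul]
    refine hm.trans (sup_le ?_ (F.annihilator_le_homologyAnnihilator _))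
    rw [← multiPow_nsmul, succ_nsmul']
    exact (Ideal.mul_mono_left hsum).trans (F.homologyAnnihilator_mul_multiPow_le _ _)
  filter_upwards [eventually_exact hF.even_le (hann.trans inf_le_left),
    eventually_exact (F := F.swap) hF.odd_le (hann.trans inf_le_right)] with n hEven hOdd
  exact ⟨hEven, hOdd⟩

end Acyclic

/-- Multiplication by `a` on `X` is null-homotopic by a homotopy that raises filtration degrees
by `m`. -/
def HasContraction (F : MultiFiltration I X) (a : A) (m : ι → ℕ) : Prop :=
  ∃ (hEven : X.even →ₗ[A] X.odd) (hOdd : X.odd →ₗ[A] X.even),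
    (∀ v, X.dOdd (hEven v) + hOdd (X.dEven v) = a • v) ∧
    (∀ v, X.dEven (hOdd v) + hEven (X.dOdd v) = a • v) ∧
    (∀ n, ∀ v ∈ (F.sub n).even, hEven v ∈ (F.sub (n + m)).odd) ∧
    (∀ n, ∀ v ∈ (F.sub n).odd, hOdd v ∈ (F.sub (n + m)).even)

namespace HasContraction

variable {F : MultiFiltration I X} {a : A} {m : ι → ℕ}

lemma swap : F.HasContraction a m → F.swap.HasContraction a m := fun
  | ⟨hEven, hOdd, eq_even, eq_odd, mem_odd, mem_even⟩ =>
    ⟨hOdd, hEven, eq_odd, eq_even, mem_even, mem_odd⟩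

lemma mem_evenHomologyAnnihilator (h : F.HasContraction a m) :
    a ∈ F.evenHomologyAnnihilator m := by
  obtain ⟨hEven, hOdd, eq_even, -, mem_odd, -⟩ := h
  refine F.mem_evenHomologyAnnihilator.2 fun n v hv hz => ⟨hEven v, mem_odd n v hv, ?_⟩
  rw [← eq_even, hz, map_zero, add_zero]

lemma mem_homologyAnnihilator (h : F.HasContraction a m) : a ∈ F.homologyAnnihilator m :=
  ⟨h.mem_evenHomologyAnnihilator, h.swap.mem_evenHomologyAnnihilator⟩

end HasContraction

end MultiFiltration

namespace MultiFiltration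

section Adic

variable {A : Type u} [CommRing A] {ι : Type*} [Fintype ι] (I : ι → Ideal A)
  (M : Type v) [AddCommGroup M] [Module A M]

/-- The adic filtration of a module, as a filtration of the complex concentrated in even degree. -/
abbrev adic :
    MultiFiltration I (of A M) where
  sub n := ⟨multiPow I n • ⊤, ⊤, fun _ _ => trivial, fun _ _ => zero_mem _⟩
  smul_mem_even ha hv := by
    have := Submodule.smul_mem_smul ha hv
    rwa [← Submodule.mul_smul, mul_comm, ← multiPow_add] at this
  smul_mem_odd _ _ := trivial

lemma isAdic_adic : (adic I M).IsAdic where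
  even_le _ := le_rfl
  odd_le _ _ _ := zero_mem _
  exists_le_even n := ⟨n, le_rfl⟩
  exists_le_odd n := ⟨n, le_top⟩

end Adic

section Koszul

variable {A : Type u} [CommRing A] {ι : Type*} [Fintype ι] [DecidableEq ι] {I : ι → Ideal A}
  {X : TwoPeriodicComplex.{u, v} A}

lemma smul_mem_even_single (F : MultiFiltration I X) {i : ι} (y : I i) {n : ι → ℕ} {v : X.even}
    (hv : v ∈ (F.sub n).even) : (y : A) • v ∈ (F.sub (n + Pi.single i 1)).even :=
  F.smul_mem_even (by rw [multiPow_single, pow_one]; exact y.2) hv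

/-- The filtration on the cone of an element of `I i`, in which this element has degree one in the
direction `i`. -/
abbrev cone (i : ι) (y : I i) (F : MultiFiltration I X) :
    MultiFiltration I (TwoPeriodicComplex.cone (y : A) X) where
  sub n := (F.sub (n + Pi.single i 1)).cone (y : A) (F.sub n)
    (fun _ hv => F.smul_mem_even_single y hv) (fun _ hv => F.swap.smul_mem_even_single y hv)
  smul_mem_even ha hv :=
    ⟨add_right_comm _ (Pi.single i 1 : ι → ℕ) _ ▸ F.smul_mem_even ha hv.1, F.smul_mem_odd ha hv.2⟩
  smul_mem_odd ha hv :=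
    ⟨add_right_comm _ (Pi.single i 1 : ι → ℕ) _ ▸ F.smul_mem_odd ha hv.1, F.smul_mem_even ha hv.2⟩

/-- The underlying ring elements of a list of elements of the ideals `I i`. -/
abbrev values (L : List ((i : ι) × I i)) : List A := L.map fun y => (y.2 : A)

/-- The filtration on the Koszul complex of a list of elements of the ideals `I i`. -/
def koszul : (L : List ((i : ι) × I i)) → {X : TwoPeriodicComplex.{u, v} A} →
    MultiFiltration I X → MultiFiltration I (TwoPeriodicComplex.koszul (values L) X)
  | [], _, F => F
  | y :: L, _, F => koszul L (F.cone y.1 y.2)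

lemma IsAdic.cone {F : MultiFiltration I X} (h : F.IsAdic) (i : ι) (y : I i) :
    (F.cone i y).IsAdic where
  even_le n := by
    rw [← Submodule.prod_top, ideal_smul_prod]
    exact Submodule.prod_mono ((h.even_le _).trans
      (Submodule.smul_mono_left (multiPow_antitone I le_self_add))) (h.odd_le n)
  odd_le n := by
    rw [← Submodule.prod_top, ideal_smul_prod]
    exact Submodule.prod_mono ((h.odd_le _).trans
      (Submodule.smul_mono_left (multiPow_antitone I le_self_add))) (h.even_le n)
  exists_le_even n := by
    obtain ⟨m, hm⟩ := h.exists_le_even (n + Pi.single i 1)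
    obtain ⟨m', hm'⟩ := h.exists_le_odd n
    refine ⟨m + m', ?_⟩
    rw [← Submodule.prod_top, ideal_smul_prod]
    exact Submodule.prod_mono
      ((Submodule.smul_mono_left (multiPow_antitone I le_self_add)).trans hm)
      ((Submodule.smul_mono_left (multiPow_antitone I le_add_self)).trans hm')
  exists_le_odd n := by
    obtain ⟨m, hm⟩ := h.exists_le_odd (n + Pi.single i 1)
    obtain ⟨m', hm'⟩ := h.exists_le_even n
    refine ⟨m + m', ?_⟩
    rw [← Submodule.prod_top, ideal_smul_prod]
    exact Submodule.prod_mono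
      ((Submodule.smul_mono_left (multiPow_antitone I le_self_add)).trans hm)
      ((Submodule.smul_mono_left (multiPow_antitone I le_add_self)).trans hm')

lemma IsAdic.koszul (L : List ((i : ι) × I i)) {X : TwoPeriodicComplex.{u, v} A}
    {F : MultiFiltration I X} (h : F.IsAdic) : (F.koszul L).IsAdic := by
  induction L generalizing X with
  | nil => exact h
  | cons y _ ih => exact ih (h.cone y.1 y.2)

lemma hasContraction_cone (i : ι) (y : I i) (F : MultiFiltration I X) :
    (F.cone i y).HasContraction (y : A) (Pi.single i 1) := by
  refine ⟨LinearMap.inr A X.odd X.even ∘ₗ LinearMap.fst A _ _,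
    LinearMap.inr A X.even X.odd ∘ₗ LinearMap.fst A _ _, ?_, ?_,
    fun n v hv => ⟨zero_mem _, hv.1⟩, fun n v hv => ⟨zero_mem _, hv.1⟩⟩
  all_goals
    rintro ⟨a, b⟩
    simp

lemma HasContraction.cone {F : MultiFiltration I X} {a : A} {m : ι → ℕ} (h : F.HasContraction a m)
    (i : ι) (y : I i) : (F.cone i y).HasContraction a m := by
  obtain ⟨hEven, hOdd, eq_even, eq_odd, mem_odd, mem_even⟩ := h
  refine ⟨hEven.prodMap (-hOdd), hOdd.prodMap (-hEven), ?_, ?_,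
    fun n v hv => ⟨add_right_comm n _ m ▸ mem_odd _ _ hv.1, neg_mem (mem_even _ _ hv.2)⟩,
    fun n v hv => ⟨add_right_comm n _ m ▸ mem_even _ _ hv.1, neg_mem (mem_odd _ _ hv.2)⟩⟩
  · rintro ⟨b, c⟩
    ext
    · simp [← eq_even]
      abel
    · simp [← eq_odd]
  · rintro ⟨b, c⟩
    ext
    · simp [← eq_odd]
      abel
    · simp [← eq_even]

lemma HasContraction.koszul (L : List ((i : ι) × I i)) {X : TwoPeriodicComplex.{u, v} A}
    {F : MultiFiltration I X} {a : A} {m : ι → ℕ} (h : F.HasContraction a m) :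
    (F.koszul L).HasContraction a m := by
  induction L generalizing X with
  | nil => exact h
  | cons y _ ih => exact ih (h.cone y.1 y.2)

lemma hasContraction_koszul {L : List ((i : ι) × I i)} {y : (i : ι) × I i} (hy : y ∈ L)
    {X : TwoPeriodicComplex.{u, v} A} (F : MultiFiltration I X) :
    (F.koszul L).HasContraction (y.2 : A) (Pi.single y.1 1) := by
  induction L generalizing X with
  | nil => simp at hy
  | cons z L ih =>
    rcases List.mem_cons.1 hy with rfl | hy
    · exact (hasContraction_cone y.1 y.2 F).koszul L
    · exact ih hy _

end Koszul

end MultiFiltration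

end TwoPeriodicComplex

/-! ### Euler characteristics as iterated differences -/

section IteratedFwdDiff

variable {ι : Type*} [DecidableEq ι] {G H : Type*} [AddCommGroup G] [AddCommGroup H]

/-- The iterated forward differences of a function on `ι → ℕ` along a list of coordinate
directions. -/
def iteratedFwdDiff : List ι → ((ι → ℕ) → G) → (ι → ℕ) → G
  | [], p => p
  | i :: l, p => iteratedFwdDiff l (fwdDiff (Pi.single i 1) p)

lemma iteratedFwdDiff_append (l l' : List ι) (p : (ι → ℕ) → G) :
    iteratedFwdDiff (l ++ l') p = iteratedFwdDiff l' (iteratedFwdDiff l p) := by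
  induction l generalizing p with
  | nil => rfl
  | cons i _ ih => exact ih _

lemma map_iteratedFwdDiff (φ : G →+ H) (l : List ι) (p : (ι → ℕ) → G) (n : ι → ℕ) :
    φ (iteratedFwdDiff l p n) = iteratedFwdDiff l (fun m => φ (p m)) n := by
  induction l generalizing p with
  | nil => rfl
  | cons i _ ih =>
    rw [iteratedFwdDiff, iteratedFwdDiff, ih]
    simp only [fwdDiff, map_sub]
    rfl

lemma list_count_cons_eq_add_single (i : ι) (l : List ι) :
    (fun j => (i :: l).count j) = (fun j => l.count j) + Pi.single i 1 := by
  ext j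
  rw [List.count_cons, Pi.add_apply, Pi.single_apply]
  simp only [beq_iff_eq, eq_comm (a := i)]

lemma list_count_replicate_eq_nsmul_single (i : ι) (k : ℕ) :
    (fun j => (List.replicate k i).count j) = k • Pi.single i 1 := by
  ext j
  rcases eq_or_ne i j with rfl | hj
  · simp
  · simp [List.count_replicate, hj, hj.symm]

lemma iteratedFwdDiff_congr {l : List ι} {p q : (ι → ℕ) → G} {n : ι → ℕ}
    (h : ∀ m, n ≤ m → m ≤ n + (fun i => l.count i) → p m = q m) :
    iteratedFwdDiff l p n = iteratedFwdDiff l q n := by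
  induction l generalizing p q with
  | nil => exact h n le_rfl le_self_add
  | cons i l ih =>
    rw [list_count_cons_eq_add_single, ← add_assoc] at h
    refine ih fun m hnm hm => ?_
    rw [fwdDiff, fwdDiff, h m hnm (hm.trans le_self_add),
      h _ (hnm.trans le_self_add) (add_le_add_left hm _)]

lemma eventually_iteratedFwdDiff_eq {p q : (ι → ℕ) → G} (h : ∀ᶠ n in Filter.atTop, p n = q n)
    (l : List ι) : ∀ᶠ n in Filter.atTop, iteratedFwdDiff l p n = iteratedFwdDiff l q n :=
  (Filter.eventually_forall_ge_atTop.2 h).mono fun _ hn =>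
    iteratedFwdDiff_congr fun m hnm _ => hn m hnm

lemma iteratedFwdDiff_sum_mul {R τ : Type*} [CommRing R] (l : List ι) (s : Finset τ) (a : τ → R)
    (p : τ → (ι → ℕ) → R) (n : ι → ℕ) :
    iteratedFwdDiff l (fun m => ∑ t ∈ s, a t * p t m) n =
      ∑ t ∈ s, a t * iteratedFwdDiff l (p t) n := by
  induction l generalizing p with
  | nil => rfl
  | cons i l ih =>
    simp only [iteratedFwdDiff, ← ih]
    congr 1
    ext m
    simp only [fwdDiff, mul_sub, Finset.sum_sub_distrib]

variable {R : Type*} [CommRing R] [Fintype ι]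

lemma fwdDiff_single_prod (i : ι) (f : ι → R → R) :
    fwdDiff (Pi.single i 1) (fun n : ι → ℕ => ∏ j, f j (n j)) =
      fun n => ∏ j, Function.update f i (fwdDiff 1 (f i)) j (n j) := by
  ext n
  have hne (g : R → R) : ∏ j ∈ Finset.univ.erase i, Function.update f i g j (n j) =
      ∏ j ∈ Finset.univ.erase i, f j (n j) :=
    Finset.prod_congr rfl fun j hj => by rw [Function.update_of_ne (Finset.ne_of_mem_erase hj)]
  have hshift : ∏ j ∈ Finset.univ.erase i, f j ((n + Pi.single i 1 : ι → ℕ) j : ℕ) =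
      ∏ j ∈ Finset.univ.erase i, f j (n j) :=
    Finset.prod_congr rfl fun j hj => by simp [Pi.single_eq_of_ne (Finset.ne_of_mem_erase hj)]
  rw [fwdDiff, ← Finset.mul_prod_erase _ _ (Finset.mem_univ i), hshift,
    ← Finset.mul_prod_erase _ _ (Finset.mem_univ i), ← sub_mul,
    ← Finset.mul_prod_erase _ _ (Finset.mem_univ i), hne, Function.update_self]
  simp [fwdDiff]

lemma iteratedFwdDiff_prod (l : List ι) (f : ι → R → R) (n : ι → ℕ) :
    iteratedFwdDiff l (fun m => ∏ j, f j (m j)) n = ∏ j, (fwdDiff 1)^[l.count j] (f j) (n j) := by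
  induction l generalizing f with
  | nil => rfl
  | cons i l ih =>
    rw [iteratedFwdDiff, fwdDiff_single_prod, ih]
    refine Finset.prod_congr rfl fun j _ => ?_
    obtain rfl | hj := eq_or_ne j i
    · rw [Function.update_self, List.count_cons_self, Function.iterate_succ_apply]
    · rw [Function.update_of_ne hj, List.count_cons_of_ne hj.symm]

lemma iteratedFwdDiff_prod_pow {l : List ι} {m : ι → ℕ} (hm : ∑ i, m i ≤ l.length) (n : ι → ℕ) :
    iteratedFwdDiff l (fun n => ∏ j, (n j : R) ^ m j) n =
      if m = fun j => l.count j then (∏ j, (l.count j).factorial : R) else 0 := by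
  rw [iteratedFwdDiff_prod l fun j r => r ^ m j]
  split_ifs with h
  · subst h
    simp only [fwdDiff_iter_eq_factorial, Pi.natCast_apply]
  · have hl : ∑ i, l.count i = l.length := by
      simpa using Multiset.sum_count_eq_card (m := (l : Multiset ι)) fun i _ => Finset.mem_univ i
    obtain ⟨j, hj⟩ : ∃ j, m j < l.count j := by
      by_contra! hle
      refine h (funext fun i => ?_)
      have hsum := (Finset.sum_eq_sum_iff_of_le fun i _ => hle i).1
        ((Finset.sum_le_sum fun i _ => hle i).antisymm (hm.trans_eq hl.symm))
      exact (hsum i (Finset.mem_univ i)).symm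
    exact Finset.prod_eq_zero (Finset.mem_univ j) (by rw [fwdDiff_iter_pow_eq_zero_of_lt hj]; rfl)

lemma iteratedFwdDiff_mvPolynomial_eval {l : List ι} {P : MvPolynomial ι R}
    (hP : P.totalDegree ≤ l.length) (n : ι → ℕ) :
    iteratedFwdDiff l (fun m => MvPolynomial.eval (fun i => (m i : R)) P) n =
      P.coeff (Finsupp.equivFunOnFinite.symm fun j => l.count j) *
        ∏ j, (l.count j).factorial := by
  simp only [MvPolynomial.eval_eq']
  rw [iteratedFwdDiff_sum_mul l P.support (fun t => P.coeff t) fun t m => ∏ j, (m j : R) ^ t j]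
  have hterm : ∀ t ∈ P.support, iteratedFwdDiff l (fun m => ∏ j, (m j : R) ^ t j) n =
      if t = Finsupp.equivFunOnFinite.symm (fun j => l.count j) then
        (∏ j, (l.count j).factorial : R) else 0 := by
    intro t ht
    rw [iteratedFwdDiff_prod_pow]
    · exact if_congr (Finsupp.equivFunOnFinite.eq_symm_apply (x := fun j => l.count j)).symm rfl rfl
    · refine le_trans ?_ ((MvPolynomial.le_totalDegree ht).trans hP)
      rw [Finsupp.sum_fintype _ _ fun _ => rfl]
  rw [Finset.sum_congr rfl fun t ht => by rw [hterm t ht, mul_ite, mul_zero],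
    Finset.sum_ite_eq', Nat.cast_prod, ite_eq_left_iff]
  intro h
  rw [MvPolynomial.notMem_support_iff.1 h, zero_mul]

lemma iteratedFwdDiff_polynomial_eval {d : ℕ} {P : Polynomial R} (hP : P.natDegree ≤ d)
    (n : Fin 1 → ℕ) :
    iteratedFwdDiff (List.replicate d 0) (fun m => P.eval (m 0 : R)) n =
      P.coeff d * d.factorial := by
  have h := iteratedFwdDiff_prod (List.replicate d (0 : Fin 1)) (fun _ => P.eval) n
  simp only [Fintype.prod_unique, Fin.default_eq_zero, List.count_replicate_self] at h
  refine h.trans ?_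
  obtain hlt | rfl := hP.lt_or_eq
  · rw [Polynomial.fwdDiff_iter_eq_zero_of_degree_lt hlt, P.coeff_eq_zero_of_natDegree_lt hlt,
      zero_mul, Pi.zero_apply]
  · rw [P.fwdDiff_iter_degree_eq_factorial]
    simp

end IteratedFwdDiff

namespace TwoPeriodicComplex

lemma IsAcyclic.eulerChar_eq_relEulerChar {A : Type u} [CommRing A]
    {X : TwoPeriodicComplex.{u, v} A} {U V : Subcomplex X} (hV : V.toComplex.IsAcyclic)
    (h : Subcomplex.FiniteIndex U V) :
    U.toComplex.FiniteHomology ∧ U.toComplex.eulerChar = Subcomplex.relEulerChar U V := by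
  refine ⟨h.finiteHomology_iff.2 hV.finiteHomology, ?_⟩
  rw [h.eulerChar_eq hV.finiteHomology, hV.eulerChar_eq_zero, zero_add]

namespace MultiFiltration

section Const

variable {A : Type u} [CommRing A] {ι : Type*} [Fintype ι] (I : ι → Ideal A)
  {X Z : TwoPeriodicComplex.{u, v} A}

/-- The constant filtration with value `V`. -/
abbrev const (V : Subcomplex X) : MultiFiltration I X where
  sub _ := V
  smul_mem_even _ hv := Submodule.smul_mem _ _ hv
  smul_mem_odd _ hv := Submodule.smul_mem _ _ hv

lemma finiteIndex_add_nsmul {I : ι → Ideal A} {F : MultiFiltration I X}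
    {e n : ι → ℕ} (h : ∀ m, n ≤ m → Subcomplex.FiniteIndex (F.sub m) (F.sub (m + e))) (t : ℕ) :
    Subcomplex.FiniteIndex (F.sub n) (F.sub (n + t • e)) := by
  induction t with
  | zero => simpa using .refl (F.sub n)
  | succ t ih =>
    rw [succ_nsmul, ← add_assoc]
    exact ih.trans (h _ le_self_add)

lemma finiteIndex_of_le_add_nsmul_single [DecidableEq ι] {I : ι → Ideal A}
    {F : MultiFiltration I X} {i : ι} {m n : ι → ℕ} {k : ℕ}
    (h : ∀ m', n ≤ m' → Subcomplex.FiniteIndex (F.sub m') (F.sub (m' + Pi.single i 1)))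
    (hnm : n ≤ m) (hm : m ≤ n + k • Pi.single i 1) :
    Subcomplex.FiniteIndex (F.sub m) (F.sub (n + k • Pi.single i 1)) := by
  have hend : m + (n i + k - m i) • Pi.single i 1 = n + k • Pi.single i 1 := by
    ext j
    have hnj : n j ≤ m j := hnm j
    have hmj := hm j
    rcases eq_or_ne j i with rfl | hj
    · simp only [Pi.add_apply, Pi.smul_apply, Pi.single_eq_same, smul_eq_mul] at hmj ⊢
      omega
    · simp only [Pi.add_apply, Pi.smul_apply, Pi.single_eq_of_ne hj, smul_zero] at hmj ⊢
      omega
  exact hend ▸ finiteIndex_add_nsmul (fun m' hm' => h m' (hnm.trans hm')) (n i + k - m i)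

variable [DecidableEq ι] (L : List ((i : ι) × I i)) (n : ι → ℕ)

lemma koszul_const_top : ((const I (⊤ : Subcomplex X)).koszul L).sub n = ⊤ := by
  induction L generalizing X with
  | nil => rfl
  | cons y _ ih =>
    have hcone : (const I (⊤ : Subcomplex X)).cone y.1 y.2 = const I ⊤ := by
      simp only [const, MultiFiltration.cone, Subcomplex.cone_top]
    exact (congrArg (fun F => (MultiFiltration.koszul _ F).sub n) hcone).trans ih

lemma isKernel_koszul_const {V : Subcomplex X} {p : Hom X Z} (h : V.IsKernel p) :
    (((const I V).koszul L).sub n).IsKernel (p.koszul (values L)) := by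
  induction L generalizing X Z with
  | nil => exact h
  | cons y _ ih => exact ih (h.cone (y.2 : A))

end Const

section Koszul

variable {A : Type u} [CommRing A] {ι : Type*} [Fintype ι] [DecidableEq ι] {I : ι → Ideal A}

section Cone

variable {i : ι} {m n : ι → ℕ} {X : TwoPeriodicComplex.{u, v} A} {F G : MultiFiltration I X}

lemma finiteIndex_cone (h : Subcomplex.FiniteIndex (F.sub m) (G.sub n))
    (hshift : Subcomplex.FiniteIndex (F.sub (m + Pi.single i 1)) (G.sub (n + Pi.single i 1)))
    (y : I i) :
    Subcomplex.FiniteIndex ((F.cone i y).sub m) ((G.cone i y).sub n) where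
  le := ⟨Submodule.prod_mono hshift.le.1 h.le.2, Submodule.prod_mono hshift.le.2 h.le.1⟩
  even_ne_top := by
    rw [relLength_prod]
    simp [hshift.even_ne_top, h.odd_ne_top]
  odd_ne_top := by
    rw [relLength_prod]
    simp [hshift.odd_ne_top, h.even_ne_top]

lemma relEulerChar_cone (h : Subcomplex.FiniteIndex (F.sub m) (G.sub n))
    (hshift : Subcomplex.FiniteIndex (F.sub (m + Pi.single i 1)) (G.sub (n + Pi.single i 1)))
    (y : I i) :
    Subcomplex.relEulerChar ((F.cone i y).sub m) ((G.cone i y).sub n) =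
      Subcomplex.relEulerChar (F.sub (m + Pi.single i 1)) (G.sub (n + Pi.single i 1)) -
        Subcomplex.relEulerChar (F.sub m) (G.sub n) := by
  rw [Subcomplex.relEulerChar, relLength_prod, relLength_prod,
    ENat.toNat_add hshift.even_ne_top h.odd_ne_top, ENat.toNat_add hshift.odd_ne_top h.even_ne_top,
    Subcomplex.relEulerChar, Subcomplex.relEulerChar]
  push_cast
  ring

end Cone

lemma finiteIndex_koszul_and_relEulerChar (L : List ((i : ι) × I i)) (e n : ι → ℕ)
    {X : TwoPeriodicComplex.{u, v} A} {F G : MultiFiltration I X}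
    (h : ∀ m, n ≤ m → m ≤ n + (fun i => (L.map Sigma.fst).count i) →
      Subcomplex.FiniteIndex (F.sub m) (G.sub (m + e))) :
    Subcomplex.FiniteIndex ((F.koszul L).sub n) ((G.koszul L).sub (n + e)) ∧
      Subcomplex.relEulerChar ((F.koszul L).sub n) ((G.koszul L).sub (n + e)) =
        iteratedFwdDiff (L.map Sigma.fst)
          (fun m => Subcomplex.relEulerChar (F.sub m) (G.sub (m + e))) n := by
  induction L generalizing X with
  | nil => exact ⟨h n le_rfl le_self_add, rfl⟩
  | cons y L ih =>
    rw [List.map_cons, list_count_cons_eq_add_single, ← add_assoc] at h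
    have hshift (m) (hnm : n ≤ m) (hm : m ≤ n + (fun i => (L.map Sigma.fst).count i)) :
        Subcomplex.FiniteIndex (F.sub (m + Pi.single y.1 1)) (G.sub (m + e + Pi.single y.1 1)) :=
      add_right_comm m e _ ▸ h _ (hnm.trans le_self_add) (add_le_add_left hm _)
    obtain ⟨hfin, heq⟩ := ih fun m hnm hm =>
      finiteIndex_cone (h m hnm (hm.trans le_self_add)) (hshift m hnm hm) y.2
    refine ⟨hfin, heq.trans (iteratedFwdDiff_congr fun m hnm hm => ?_)⟩
    rw [relEulerChar_cone (h m hnm (hm.trans le_self_add)) (hshift m hnm hm), fwdDiff,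
      add_right_comm m _ e]

theorem eulerChar_koszul_eq_iteratedFwdDiff (L : List ((i : ι) × I i)) {n : ι → ℕ}
    {X : TwoPeriodicComplex.{u, v} A} {F : MultiFiltration I X}
    (h : ∀ m, n ≤ m → Subcomplex.FiniteIndex ⊤ (F.sub m))
    (hacyclic : ((F.koszul L).sub n).toComplex.IsAcyclic) :
    (TwoPeriodicComplex.koszul (values L) X).FiniteHomology ∧
      (TwoPeriodicComplex.koszul (values L) X).eulerChar =
        iteratedFwdDiff (L.map Sigma.fst) (fun m => Subcomplex.relEulerChar ⊤ (F.sub m)) n := by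
  obtain ⟨hindex, heq⟩ := finiteIndex_koszul_and_relEulerChar L 0 n (F := const I ⊤) (G := F)
    fun m hm _ => h m hm
  rw [koszul_const_top] at hindex heq
  obtain ⟨hfin, hchar⟩ := hacyclic.eulerChar_eq_relEulerChar hindex
  refine ⟨Subcomplex.finiteHomology_of_top hfin, ?_⟩
  rw [← Subcomplex.eulerChar_top hfin, hchar]
  exact heq

theorem eulerChar_koszul_const_eq_iteratedFwdDiff {L : List ((i : ι) × I i)} {i : ι} {k : ℕ}
    (hL : L.map Sigma.fst = List.replicate (k + 1) i) {n : ι → ℕ}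
    {X : TwoPeriodicComplex.{u, v} A} {F : MultiFiltration I X}
    (h : ∀ m, n ≤ m → Subcomplex.FiniteIndex (F.sub m) (F.sub (m + Pi.single i 1)))
    (hacyclic : ((F.koszul L).sub n).toComplex.IsAcyclic) :
    (((const I (F.sub (n + (k + 1) • Pi.single i 1))).koszul L).sub n).toComplex.FiniteHomology ∧
    (((const I (F.sub (n + (k + 1) • Pi.single i 1))).koszul L).sub n).toComplex.eulerChar =
      iteratedFwdDiff (List.replicate k i)
        (fun m => Subcomplex.relEulerChar (F.sub m) (F.sub (m + Pi.single i 1))) n := by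
  set V := F.sub (n + (k + 1) • Pi.single i 1)
  have hV {m} (hnm : n ≤ m) (hm : m ≤ n + (k + 1) • Pi.single i 1) :
      Subcomplex.FiniteIndex (F.sub m) V := finiteIndex_of_le_add_nsmul_single h hnm hm
  obtain ⟨hindex, hdiff⟩ := finiteIndex_koszul_and_relEulerChar L 0 n (F := F) (G := const I V)
    fun m hnm hm => hV hnm (by rwa [hL, list_count_replicate_eq_nsmul_single] at hm)
  have hhomV := hindex.finiteHomology_iff.1 hacyclic.finiteHomology
  refine ⟨hhomV, ?_⟩
  have hchar := hindex.eulerChar_eq hhomV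
  have hneg : iteratedFwdDiff (List.replicate (k + 1) i)
      (fun m => Subcomplex.relEulerChar (F.sub m) V) n =
      -iteratedFwdDiff (List.replicate k i)
        (fun m => Subcomplex.relEulerChar (F.sub m) (F.sub (m + Pi.single i 1))) n := by
    refine .trans ?_ (map_iteratedFwdDiff (negAddMonoidHom (α := ℤ)) _ _ _).symm
    refine iteratedFwdDiff_congr (l := List.replicate k i) fun m hnm hm => ?_
    rw [list_count_replicate_eq_nsmul_single] at hm
    have hstep : m + Pi.single i 1 ≤ n + (k + 1) • Pi.single i 1 := by
      rw [succ_nsmul, ← add_assoc]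
      exact add_le_add_left hm _
    have htrans := (h m hnm).relEulerChar_trans (hV (hnm.trans le_self_add) hstep)
    rw [fwdDiff, htrans, negAddMonoidHom_apply]
    ring
  rw [hacyclic.eulerChar_eq_zero, hdiff, hL] at hchar
  exact (neg_inj.1 (hneg.symm.trans (neg_eq_of_add_eq_zero_right hchar.symm).symm)).symm

end Koszul

end MultiFiltration

end TwoPeriodicComplex

lemma add_krullDim_le_of_strictMono {α β : Type*} [Preorder α] [Preorder β] {h : ℕ∞} (f : α → β)
    (hf : StrictMono f) (hh : ∀ a, h ≤ Order.height (f a)) :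
    (h : WithBot ℕ∞) + Order.krullDim α ≤ Order.krullDim β := by
  cases isEmpty_or_nonempty α
  · simp [Order.krullDim_eq_bot]
  have : Nonempty β := .map f inferInstance
  rw [Order.krullDim_eq_iSup_coheight_of_nonempty,
    Order.krullDim_eq_iSup_height_add_coheight_of_nonempty, ← WithBot.coe_add, WithBot.coe_le_coe,
    ENat.add_iSup]
  exact iSup_le fun a => le_iSup_of_le (f a)
    (add_le_add (hh a) (Order.coheight_le_coheight_apply_of_strictMono f hf a))

lemma idealHeight_add_supportDim_le {A : Type u} [CommRing A] (a P : Ideal A) (N : Type v)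
    [AddCommGroup N] [Module A N] (hN : ∀ p ∈ Module.support A N, a ≤ p.asIdeal ∧ P ≤ p.asIdeal) :
    (idealHeight (A ⧸ a) (P.map (Ideal.Quotient.mk a)) : WithBot ℕ∞) + Module.supportDim A N ≤
      ringKrullDim (A ⧸ a) := by
  let e := a.primeSpectrumQuotientOrderIsoZeroLocus
  let f (q : Module.support A N) : PrimeSpectrum (A ⧸ a) := e.symm ⟨q.1, (hN q.1 q.2).1⟩
  refine add_krullDim_le_of_strictMono f (fun _ _ hq => e.symm.strictMono hq) fun q => ?_
  have hcomap : (f q).asIdeal.comap (Ideal.Quotient.mk a) = q.1.asIdeal :=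
    congrArg (fun p => p.1.asIdeal) (e.apply_symm_apply ⟨q.1, (hN q.1 q.2).1⟩)
  exact iInf₂_le (f q) (Ideal.map_le_iff_le_comap.2 (hcomap ▸ (hN q.1 q.2).2))

namespace TwoPeriodicComplex

namespace MultiFiltration

variable {A : Type u} [CommRing A] {ι : Type*} [Fintype ι] {I : ι → Ideal A}
  {X : TwoPeriodicComplex.{u, v} A} {F : MultiFiltration I X}

lemma IsAdic.swap (hF : F.IsAdic) : F.swap.IsAdic :=
  ⟨hF.odd_le, hF.even_le, hF.exists_le_odd, hF.exists_le_even⟩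

lemma IsAdic.le_of_mem_support_quotient (hF : F.IsAdic) {P : Ideal A}
    (hP : ∀ i, P ≤ (I i).radical) (n : ι → ℕ) {p : PrimeSpectrum A}
    (hp : p ∈ Module.support A (F.sub n).quotient.even) :
    X.annihilator ≤ p.asIdeal ∧ P ≤ p.asIdeal := by
  have hann := Module.annihilator_le_of_mem_support hp
  refine ⟨inf_le_left.trans (((F.sub n).even.mkQ.annihilator_le_of_surjective
    (F.sub n).even.mkQ_surjective).trans hann), ?_⟩
  obtain ⟨m, hm⟩ := hF.exists_le_even n
  have hpow : multiPow I m ≤ p.asIdeal := by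
    refine le_trans (fun a ha => Module.mem_annihilator.2 fun v => ?_) hann
    obtain ⟨v, rfl⟩ := (F.sub n).even.mkQ_surjective v
    rw [← map_smul, Submodule.mkQ_apply, Submodule.Quotient.mk_eq_zero]
    exact hm (Submodule.smul_mem_smul ha trivial)
  obtain ⟨i, -, hi⟩ := (Ideal.IsPrime.prod_le p.2).1 hpow
  exact (hP i).trans (p.2.radical_le_iff.2 (Ideal.IsPrime.le_of_pow_le hi))

theorem IsAdic.eulerChar_koszul_quotient_eq_zero [IsNoetherianRing A] [X.IsFinite] (hF : F.IsAdic)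
    {P : Ideal A} (hP : ∀ i, P ≤ (I i).radical) (n : ι → ℕ) {L : List A} {t : ℕ}
    (hdim : ringKrullDim (A ⧸ X.annihilator) = (t + L.length : ℕ))
    (hlt : t < idealHeight (A ⧸ X.annihilator) (P.map (Ideal.Quotient.mk X.annihilator)))
    (hfin : (TwoPeriodicComplex.koszul L (F.sub n).quotient).FiniteHomology) :
    (TwoPeriodicComplex.koszul L (F.sub n).quotient).eulerChar = 0 := by
  have key {N : Type v} [AddCommGroup N] [Module A N]
      (hN : ∀ p ∈ Module.support A N, X.annihilator ≤ p.asIdeal ∧ P ≤ p.asIdeal) :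
      Module.supportDim A N < (L.length : WithBot ℕ∞) := by
    have hle := (idealHeight_add_supportDim_le _ P N hN).trans_eq hdim
    by_contra! hge
    have hsucc : ((t + 1 : ℕ) : ℕ∞) ≤ _ := Order.add_one_le_of_lt hlt
    have hsum := (add_le_add (WithBot.coe_le_coe.2 hsucc) hge).trans hle
    norm_cast at hsum
    omega
  have : (F.sub n).quotient.IsFinite :=
    ⟨inferInstanceAs (Module.Finite A (_ ⧸ _)), inferInstanceAs (Module.Finite A (_ ⧸ _))⟩
  refine eulerChar_koszul_eq_zero_of_supportDim_lt L _ hfin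
    (key fun p hp => hF.le_of_mem_support_quotient hP n hp) (key fun p hp => ?_)
  rw [← X.annihilator_swap]
  exact hF.swap.le_of_mem_support_quotient hP n hp

theorem IsAdic.eulerChar_koszul_eq_eulerChar_koszul_const
    [DecidableEq ι] [IsNoetherianRing A] [X.IsFinite] (hF : F.IsAdic) {P : Ideal A}
    (hP : ∀ i, P ≤ (I i).radical) {L : List ((i : ι) × I i)} {t : ℕ}
    (hdim : ringKrullDim (A ⧸ X.annihilator) = (t + L.length : ℕ))
    (hlt : t < idealHeight (A ⧸ X.annihilator) (P.map (Ideal.Quotient.mk X.annihilator)))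
    {m n : ι → ℕ} (hsub : (((const I (F.sub m)).koszul L).sub n).toComplex.FiniteHomology)
    (hfin : (TwoPeriodicComplex.koszul (values L) X).FiniteHomology) :
    (TwoPeriodicComplex.koszul (values L) X).eulerChar =
      (((const I (F.sub m)).koszul L).sub n).toComplex.eulerChar := by
  have hses := (isKernel_koszul_const I L n (Subcomplex.isKernel_mkQ (F.sub m))).shortExact
  have hquot := hses.finiteHomology_right hsub hfin
  rw [hses.eulerChar_eq hsub hquot,
    hF.eulerChar_koszul_quotient_eq_zero hP m (by rwa [values, List.length_map]) hlt hquot,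
    add_zero]

end MultiFiltration

end TwoPeriodicComplex

/-! ### Joint reductions -/

section Length

variable {A N : Type*} [CommRing A] [AddCommGroup N] [Module A N]

lemma modLength_eq_length : modLength A N = Module.length A N :=
  (Module.length_eq_height ..).symm

end Length

namespace TwoPeriodicComplex

namespace Subcomplex

variable {A : Type u} [CommRing A] {M : Type v} [AddCommGroup M] [Module A M]
  {U V : Subcomplex (of A M)}

lemma odd_eq_odd_of (U V : Subcomplex (of A M)) : U.odd = V.odd :=
  have : Subsingleton (of A M).odd := inferInstanceAs (Subsingleton PUnit)
  Subsingleton.elim _ _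

lemma relLength_odd_of (U V : Subcomplex (of A M)) : relLength U.odd V.odd = 0 := by
  rw [odd_eq_odd_of U V, relLength_self]

lemma finiteIndex_of (hle : V.even ≤ U.even) (h : relLength U.even V.even ≠ ⊤) :
    FiniteIndex U V where
  le := ⟨hle, (odd_eq_odd_of V U).le⟩
  even_ne_top := h
  odd_ne_top := by
    rw [relLength_odd_of U V]
    exact ENat.zero_ne_top

lemma relEulerChar_of : relEulerChar U V = (relLength U.even V.even).toNat := by
  rw [relEulerChar, relLength_odd_of U V, ENat.toNat_zero, Nat.cast_zero, sub_zero]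

end Subcomplex

end TwoPeriodicComplex

section JointReduction

open TwoPeriodicComplex MultiFiltration

variable {A : Type u} [CommRing A] {M : Type v} [AddCommGroup M] [Module A M] {d t : ℕ}
  {I : Fin t → Ideal A} {x : Fin d → A} {c : Fin d → Fin t}

/-- The sequence `x` along a list of indices, each term as an element of its assigned ideal. -/
abbrev taggedValues (hx : ∀ j, x j ∈ I (c j)) (l : List (Fin d)) : List ((i : Fin t) × I i) :=
  l.map fun j => ⟨c j, x j, hx j⟩

lemma values_taggedValues (hx : ∀ j, x j ∈ I (c j)) (l : List (Fin d)) :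
    values (taggedValues hx l) = l.map x :=
  List.map_map

lemma map_fst_taggedValues (hx : ∀ j, x j ∈ I (c j)) (l : List (Fin d)) :
    (taggedValues hx l).map Sigma.fst = l.map c :=
  List.map_map

lemma IsJointReductionEq.isReductionMod_annihilator [IsNoetherianRing A] [Module.Finite A M]
    (h : IsJointReductionEq A M I x c) :
    IsReductionMod (Module.annihilator A M)
      (∑ i, jrIdeal A x c i * multiPow I (1 - Pi.single i 1)) (multiPow I 1) := by
  obtain ⟨hx, N, hN⟩ := h
  have hone : multiPow I 1 = ∏ i, I i := by simp [multiPow]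
  have hshift (i : Fin t) : ∏ j, I j ^ (N + if j = i then 0 else 1) =
      multiPow I (1 - Pi.single i 1) * multiPow I 1 ^ N := by
    rw [← multiPow_nsmul, ← multiPow_add, multiPow]
    refine Finset.prod_congr rfl fun j _ => ?_
    obtain rfl | hj := eq_or_ne j i <;> simp [*, add_comm]
  refine isReductionMod_annihilator_of_smul_pow_le (n := N) ?_ ?_
  · refine Finset.sum_induction _ (· ≤ multiPow I 1) (fun _ _ => sup_le) bot_le fun i _ => ?_
    rw [← single_add_one_sub_single i, multiPow_add, multiPow_single, pow_one,
      single_add_one_sub_single]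
    refine Ideal.mul_mono_left (Ideal.span_le.2 ?_)
    rintro _ ⟨j, rfl, rfl⟩
    exact hx j
  · have heq := hN (fun _ => N) fun _ => le_rfl
    rw [Finset.prod_pow, ← hone, pow_succ', Submodule.mul_smul] at heq
    rw [heq, Finset.sum_smul]
    refine Finset.sum_le_sum fun i _ => ?_
    rw [hshift, Submodule.mul_smul, Submodule.mul_smul]

theorem IsJointReductionEq.eventually_isAcyclic [IsNoetherianRing A] [Module.Finite A M]
    (h : IsJointReductionEq A M I x c) {l l' : List (Fin d)} (hl : ∀ j, j ∈ l ∨ j ∈ l') :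
    ∀ᶠ n in Filter.atTop, ((((adic I M).koszul (taggedValues h.1 l)).koszul
      (taggedValues h.1 l')).sub n).toComplex.IsAcyclic := by
  refine (((isAdic_adic I M).koszul _).koszul _).eventually_isAcyclic (Q := jrIdeal A x c)
    (fun i => Ideal.span_le.2 ?_) ?_
  · rintro _ ⟨j, rfl, rfl⟩
    refine HasContraction.mem_homologyAnnihilator ?_
    rcases hl j with hj | hj
    · exact (hasContraction_koszul (List.mem_map_of_mem hj) _).koszul _
    · exact hasContraction_koszul (List.mem_map_of_mem (f := fun j => ⟨c j, x j, h.1 j⟩) hj) _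
  · rw [annihilator_koszul, annihilator_koszul, annihilator_of]
    exact h.isReductionMod_annihilator

end JointReduction

section HilbertSamuel

open TwoPeriodicComplex MultiFiltration

variable {A : Type u} [CommRing A] {M : Type v} [AddCommGroup M] [Module A M] {d : ℕ}
  {x : Fin d → A}

lemma isJointReductionEq_span_range :
    IsJointReductionEq A M (fun _ : Fin 1 => Ideal.span (Set.range x)) x fun _ => 0 := by
  refine ⟨fun j => Ideal.subset_span ⟨j, rfl⟩, 0, fun n _ => ?_⟩
  simp [jrIdeal, pow_succ', Submodule.mul_smul]

theorem IsHSMult.eulerChar_koszul [IsNoetherianRing A] [Module.Finite A M] {e : ℕ}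
    (he : IsHSMult A M (Ideal.span (Set.range x)) d e) {l : List (Fin d)}
    (hl : l.Perm (List.finRange d)) :
    (TwoPeriodicComplex.koszul (l.map x) (of A M)).FiniteHomology ∧
      (TwoPeriodicComplex.koszul (l.map x) (of A M)).eulerChar = e := by
  obtain ⟨P, hdeg, ⟨N, hN⟩, hcoeff⟩ := he
  have hjr := isJointReductionEq_span_range (M := M) (x := x)
  set I : Fin 1 → Ideal A := fun _ => Ideal.span (Set.range x)
  have hlength (n : Fin 1 → ℕ) : relLength ⊤ (multiPow I n • ⊤ : Submodule A M) =
      Module.length A (M ⧸ (Ideal.span (Set.range x) ^ n 0 • ⊤ : Submodule A M)) := by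
    rw [relLength_top, multiPow, Fin.prod_univ_one]
  have hfin (n : Fin 1 → ℕ) (hn : (fun _ => N) ≤ n) :
      Subcomplex.FiniteIndex ⊤ ((adic I M).sub n) :=
    Subcomplex.finiteIndex_of le_top
      ((hlength n).trans_ne (Module.length_ne_top_iff.2 (hN _ (hn 0)).1))
  have hpoly : ∀ᶠ n : Fin 1 → ℕ in Filter.atTop,
      ((Subcomplex.relEulerChar ⊤ ((adic I M).sub n) : ℤ) : ℚ) = P.eval (n 0 : ℚ) := by
    filter_upwards [Filter.eventually_ge_atTop fun _ => N] with n hn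
    rw [← (hN _ (hn 0)).2, Subcomplex.relEulerChar_of, lenNat, modLength_eq_length, ← hlength]
    rfl
  obtain ⟨n, hn, hacyclic, hdiff⟩ := ((Filter.eventually_ge_atTop fun _ => N).and
    ((hjr.eventually_isAcyclic (l := []) fun j => .inr (hl.mem_iff.2 (List.mem_finRange j))).and
      (eventually_iteratedFwdDiff_eq hpoly (List.replicate d 0)))).exists
  have key := eulerChar_koszul_eq_iteratedFwdDiff _ (fun m hm => hfin m (hn.trans hm)) hacyclic
  have hmap : l.map (fun _ => (0 : Fin 1)) = List.replicate d 0 := by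
    rw [List.map_const', hl.length_eq, List.length_finRange]
  rw [values_taggedValues, map_fst_taggedValues, hmap] at key
  refine ⟨key.1, key.2.trans (Int.cast_injective (α := ℚ) ?_)⟩
  rw [Int.cast_natCast, hcoeff, ← iteratedFwdDiff_polynomial_eval hdeg n, ← hdiff]
  exact map_iteratedFwdDiff (Int.castAddHom ℚ) _ _ n

end HilbertSamuel

section MixedMultiplicity

open TwoPeriodicComplex MultiFiltration

variable {A : Type u} [CommRing A] {M : Type v} [AddCommGroup M] [Module A M] {s : ℕ}
  {J : Ideal A} {I : Fin s → Ideal A} {k0 : ℕ} {k : Fin s → ℕ} {e : ℕ}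

lemma multiPow_snoc (n : Fin (s + 1) → ℕ) :
    multiPow (Fin.snoc I J : Fin (s + 1) → Ideal A) n =
      J ^ n (Fin.last s) * ∏ i, I i ^ n i.castSucc := by
  rw [multiPow, Fin.prod_univ_castSucc, mul_comm]
  simp

lemma relLength_multiPow_snoc (n : Fin (s + 1) → ℕ) :
    relLength (multiPow (Fin.snoc I J : Fin (s + 1) → Ideal A) n • ⊤ : Submodule A M)
        (multiPow (Fin.snoc I J : Fin (s + 1) → Ideal A) (n + Pi.single (Fin.last s) 1) • ⊤) =
      Module.length A (mixedPiece A M J I (Fin.cons (n (Fin.last s)) fun i => n i.castSucc)) := by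
  have hadd : multiPow (Fin.snoc I J : Fin (s + 1) → Ideal A) (n + Pi.single (Fin.last s) 1) =
      J ^ (n (Fin.last s) + 1) * ∏ i, I i ^ n i.castSucc := by
    rw [multiPow_snoc]
    simp
  rw [hadd, multiPow_snoc]
  rfl

lemma IsMixedMult.exists_polynomial (he : IsMixedMult A M J I k0 k e) :
    ∃ P : MvPolynomial (Fin (s + 1)) ℚ, P.totalDegree ≤ k0 + ∑ i, k i ∧
      (∀ᶠ n in Filter.atTop, Subcomplex.FiniteIndex ((adic (Fin.snoc I J) M).sub n)
          ((adic (Fin.snoc I J) M).sub (n + Pi.single (Fin.last s) 1)) ∧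
        ((Subcomplex.relEulerChar ((adic (Fin.snoc I J) M).sub n)
          ((adic (Fin.snoc I J) M).sub (n + Pi.single (Fin.last s) 1)) : ℤ) : ℚ) =
          MvPolynomial.eval (fun i => (n i : ℚ)) P) ∧
      (e : ℚ) = P.coeff (Finsupp.equivFunOnFinite.symm (Fin.snoc k k0)) *
        ∏ i, ((Fin.snoc k k0 : Fin (s + 1) → ℕ) i).factorial := by
  obtain ⟨P, hdeg, ⟨N, hN⟩, hcoeff⟩ := he
  let ρ : Fin (s + 1) ≃ Fin (s + 1) := (finRotate (s + 1)).symm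
  have hρ0 : ρ 0 = Fin.last s := by rw [Equiv.symm_apply_eq, finRotate_last]
  have hρ (i : Fin s) : ρ i.succ = i.castSucc := by
    rw [Equiv.symm_apply_eq, finRotate_apply, Fin.coeSucc_eq_succ]
  have hcons {α : Type} (n : Fin (s + 1) → α) :
      (Fin.cons (n (Fin.last s)) fun i => n i.castSucc : Fin (s + 1) → α) = n ∘ ρ := by
    ext i
    refine Fin.cases ?_ (fun i => ?_) i <;> simp [hρ0, hρ]
  have hexp : Finsupp.equivFunOnFinite.symm (Fin.snoc k k0) =
      (Finsupp.equivFunOnFinite.symm (Fin.cons k0 k)).mapDomain ρ := by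
    ext j
    obtain ⟨i, rfl⟩ := ρ.surjective j
    rw [Finsupp.mapDomain_apply ρ.injective]
    refine Fin.cases ?_ (fun i => ?_) i <;> simp [hρ0, hρ]
  refine ⟨P.rename ρ, (P.totalDegree_rename_le ρ).trans hdeg, ?_, ?_⟩
  · filter_upwards [Filter.eventually_ge_atTop fun _ => N] with n hn
    obtain ⟨hfin, heval⟩ := hN (n ∘ ρ) fun i => hn (ρ i)
    rw [← hcons, ← Module.length_ne_top_iff, ← relLength_multiPow_snoc] at hfin
    refine ⟨Subcomplex.finiteIndex_of
      (Submodule.smul_mono_left (multiPow_antitone _ le_self_add)) hfin, ?_⟩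
    rw [Subcomplex.relEulerChar_of, relLength_multiPow_snoc, hcons, MvPolynomial.eval_rename,
      ← modLength_eq_length, Int.cast_natCast]
    exact heval
  · rw [hcoeff, hexp, MvPolynomial.coeff_rename_mapDomain _ ρ.injective, Fin.prod_univ_castSucc]
    simp [mul_comm]

lemma IsMixedMult.eventually_iteratedFwdDiff_eq (he : IsMixedMult A M J I k0 k e)
    {l : List (Fin (s + 1))} (hl : (fun i => l.count i) = (Fin.snoc k k0 : Fin (s + 1) → ℕ)) :
    ∀ᶠ n in Filter.atTop, Subcomplex.FiniteIndex ((adic (Fin.snoc I J) M).sub n)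
        ((adic (Fin.snoc I J) M).sub (n + Pi.single (Fin.last s) 1)) ∧
      iteratedFwdDiff l (fun m => Subcomplex.relEulerChar ((adic (Fin.snoc I J) M).sub m)
        ((adic (Fin.snoc I J) M).sub (m + Pi.single (Fin.last s) 1))) n = e := by
  obtain ⟨P, hdeg, hP, hcoeff⟩ := he.exists_polynomial
  have hlength : k0 + ∑ i, k i = l.length := by
    have hsum : ∑ i, l.count i = l.length := by
      simpa using Multiset.sum_count_eq_card (m := (l : Multiset (Fin (s + 1))))
        fun i _ => Finset.mem_univ i
    rw [← hsum, Finset.sum_congr rfl fun i _ => congrFun hl i, Fin.sum_univ_castSucc]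
    simp [add_comm]
  filter_upwards [hP, _root_.eventually_iteratedFwdDiff_eq (hP.mono fun n hn => hn.2) l]
    with n hn hdiff
  refine ⟨hn.1, Int.cast_injective (α := ℚ) ?_⟩
  rw [Int.cast_natCast, hcoeff]
  simp only [← hl]
  rw [← iteratedFwdDiff_mvPolynomial_eval (hdeg.trans_eq hlength) n, ← hdiff]
  exact map_iteratedFwdDiff (Int.castAddHom ℚ) l _ n

end MixedMultiplicity

section Counting

variable {ι : Type*} [DecidableEq ι] {d : ℕ} {c : Fin d → ι}

lemma count_map_finRange (i : ι) :
    ((List.finRange d).map c).count i = (Finset.univ.filter fun j => c j = i).card := by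
  rw [List.count_eq_countP, List.countP_map, List.countP_eq_length_filter,
    ← List.toFinset_card_of_nodup ((List.nodup_finRange d).filter _)]
  congr 1
  ext j
  simp

lemma exists_append_perm_finRange {i : ι} {k : ℕ}
    (hi : (Finset.univ.filter fun j => c j = i).card = k) :
    ∃ l l' : List (Fin d), (l ++ l').Perm (List.finRange d) ∧ l'.map c = List.replicate k i := by
  refine ⟨(List.finRange d).filter fun j => !decide (c j = i),
    (List.finRange d).filter fun j => decide (c j = i),
    List.perm_append_comm.trans (List.filter_append_perm _ _), ?_⟩
  refine List.eq_replicate_iff.2 ⟨?_, by simp⟩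
  rw [List.length_map, ← hi, ← count_map_finRange, List.count_eq_countP, List.countP_map,
    List.countP_eq_length_filter]
  congr 1

lemma OfTypeCount.sum_eq {s : ℕ} {c : Fin d → Fin s} {k : Fin s → ℕ} (h : OfTypeCount c k) :
    ∑ i, k i = d := by
  rw [← Finset.sum_congr rfl fun i _ => h i,
    ← Finset.card_eq_sum_card_fiberwise fun j _ => Finset.mem_univ (c j), Finset.card_univ,
    Fintype.card_fin]

lemma OfTypeCount.count_append_replicate {s : ℕ} {c : Fin d → Fin (s + 1)} {k : Fin s → ℕ}
    {k0 : ℕ} (h : OfTypeCount c (Fin.snoc k (k0 + 1))) {l l' : List (Fin d)}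
    (hperm : (l ++ l').Perm (List.finRange d))
    (hl' : l'.map c = List.replicate (k0 + 1) (Fin.last s)) :
    (fun i => (l.map c ++ List.replicate k0 (Fin.last s)).count i) =
      (Fin.snoc k k0 : Fin (s + 1) → ℕ) := by
  ext i
  have hi := (count_map_finRange i).trans (h i)
  rw [← (hperm.map c).count_eq, List.map_append, hl', List.count_append, List.count_replicate] at hi
  rw [List.count_append, List.count_replicate]
  refine Fin.lastCases (fun hi => ?_) (fun i hi => ?_) i hi
  · simp only [beq_self_eq_true, if_true, Fin.snoc_last] at hi ⊢
    omega
  · simpa [(Fin.castSucc_lt_last i).ne'] using hi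

end Counting

section Comparison

open TwoPeriodicComplex MultiFiltration

variable {A : Type u} [CommRing A] [IsNoetherianRing A] {M : Type v} [AddCommGroup M]
  [Module A M] [Module.Finite A M] {s d : ℕ} {J : Ideal A} {I : Fin s → Ideal A}
  {k0 : ℕ} {k : Fin s → ℕ} {x : Fin d → A} {c : Fin d → Fin (s + 1)}

theorem IsMixedMult.exists_eulerChar_koszul_const_eq {e : ℕ} (he : IsMixedMult A M J I k0 k e)
    (hjr : IsJointReductionEq A M (Fin.snoc I J) x c)
    (hc : OfTypeCount c (Fin.snoc k (k0 + 1))) {l l' : List (Fin d)}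
    (hperm : (l ++ l').Perm (List.finRange d))
    (hl' : l'.map c = List.replicate (k0 + 1) (Fin.last s)) :
    ∃ m n, (((const _ (((adic _ M).koszul (taggedValues hjr.1 l)).sub m)).koszul
        (taggedValues hjr.1 l')).sub n).toComplex.FiniteHomology ∧
      (((const _ (((adic _ M).koszul (taggedValues hjr.1 l)).sub m)).koszul
        (taggedValues hjr.1 l')).sub n).toComplex.eulerChar = e := by
  have hmem (j : Fin d) : j ∈ l ∨ j ∈ l' :=
    List.mem_append.1 (hperm.mem_iff.2 (List.mem_finRange j))
  obtain ⟨n, hn, hacyclic⟩ := ((Filter.eventually_forall_ge_atTop.2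
    (he.eventually_iteratedFwdDiff_eq (hc.count_append_replicate hperm hl'))).and
      (hjr.eventually_isAcyclic hmem)).exists
  have hkoszul (m : Fin (s + 1) → ℕ) (hm : n ≤ m) :=
    finiteIndex_koszul_and_relEulerChar (taggedValues hjr.1 l) (Pi.single (Fin.last s) 1) m
      fun m' hm' _ => (hn m' (hm.trans hm')).1
  obtain ⟨hfin, hchar⟩ := eulerChar_koszul_const_eq_iteratedFwdDiff
    ((map_fst_taggedValues hjr.1 l').trans hl') (fun m hm => (hkoszul m hm).1) hacyclic
  refine ⟨_, n, hfin, hchar.trans ?_⟩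
  rw [← (hn n le_rfl).2, iteratedFwdDiff_append, ← map_fst_taggedValues hjr.1 l]
  exact iteratedFwdDiff_congr fun m hm _ => (hkoszul m hm).2

theorem mixedMult_eq_multiplicity_of_jointReduction_general (hJ : ∏ i, I i ≤ J.radical)
    (hdim : modDim A M = (d : WithBot ℕ∞))
    (hlt : ((∑ i, k i : ℕ) : ℕ∞) < idealHeight (A ⧸ Module.annihilator A M)
      (Ideal.map (Ideal.Quotient.mk (Module.annihilator A M)) (∏ i, I i)))
    (hjr : IsJointReduction A M (Fin.snoc I J) x c (Fin.snoc k (k0 + 1))) {e₁ e₂ : ℕ}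
    (he₁ : IsMixedMult A M J I k0 k e₁)
    (he₂ : IsHSMult A M (Ideal.span (Set.range x)) d e₂) : e₁ = e₂ := by
  obtain ⟨hjr, hc⟩ := hjr
  obtain ⟨l, l', hperm, hl'⟩ := exists_append_perm_finRange
    ((hc (Fin.last s)).trans (Fin.snoc_last (α := fun _ => ℕ) _ _))
  obtain ⟨m, n, hsub, hmixed⟩ := he₁.exists_eulerChar_koszul_const_eq hjr hc hperm hl'
  obtain ⟨hfin, hhs⟩ := he₂.eulerChar_koszul hperm
  rw [List.map_append, koszul_append, ← values_taggedValues hjr.1 l,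
    ← values_taggedValues hjr.1 l'] at hfin hhs
  have hP : ∀ i, ∏ i, I i ≤ ((Fin.snoc I J : Fin (s + 1) → Ideal A) i).radical := by
    refine Fin.lastCases ?_ fun i => ?_
    · rwa [Fin.snoc_last]
    · rw [Fin.snoc_castSucc]
      exact (Ideal.le_of_dvd (Finset.dvd_prod_of_mem I (Finset.mem_univ i))).trans Ideal.le_radical
  have hlength : d = ∑ i, k i + (taggedValues hjr.1 l').length := by
    refine hc.sum_eq.symm.trans ?_
    rw [Fin.sum_univ_castSucc, List.length_map, ← List.length_map (f := c), hl']
    simp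
  rw [← annihilator_of M, ← annihilator_koszul] at hlt
  have heq := ((isAdic_adic _ M).koszul _).eulerChar_koszul_eq_eulerChar_koszul_const hP
    (by rw [annihilator_koszul, annihilator_of, ← hlength]; exact hdim) hlt hsub hfin
  exact_mod_cast (hmixed.symm.trans heq.symm).trans hhs

end Comparison

lemma idealHeight_top {A : Type*} [CommRing A] : idealHeight A ⊤ = ⊤ := by
  simp only [idealHeight, iInf_eq_top]
  exact fun p hp => absurd (top_le_iff.1 hp) p.2.ne_top

lemma le_maximalIdeal_of_idealHeight_map_ne_top {A B : Type*} [CommRing A] [IsLocalRing A]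
    [CommRing B] {f : A →+* B} {P : Ideal A} (h : idealHeight B (P.map f) ≠ ⊤) :
    P ≤ maximalIdeal A := by
  refine le_maximalIdeal ?_
  rintro rfl
  exact h (by rw [Ideal.map_top, idealHeight_top])

/-- Theorem 3.1, the main theorem.  If `ht((I + Ann_A M)/Ann_A M) = h > 0`,
`k 0 + k 1 + ⋯ + k s = d - 1`, `k 1 + ⋯ + k s < h`, and `R = {x 1, …, x d}` is a joint
reduction of `(I 1, …, I s, J)` with respect to `M` of type `(k 1, …, k s, k 0 + 1)` which
is a system of parameters for `M`, then
`e_A(J^{[k 0 + 1]}, I 1^{[k 1]}, …, I s^{[k s]}; M) = e_A(R; M)`. -/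
theorem mixedMult_eq_multiplicity_of_jointReduction
    (A : Type*) [CommRing A] [IsNoetherianRing A] [IsLocalRing A]
    [Infinite (ResidueField A)]
    (M : Type*) [AddCommGroup M] [Module A M] [Module.Finite A M]
    {s : ℕ} (J : Ideal A) (hJ : J.radical = maximalIdeal A)
    (I : Fin s → Ideal A)
    (d : ℕ) (hd : 0 < d) (hdim : modDim A M = (d : WithBot ℕ∞))
    (h : ℕ) (hh : 0 < h)
    (hht : idealHeight (A ⧸ Module.annihilator A M)
        (Ideal.map (Ideal.Quotient.mk (Module.annihilator A M)) (∏ i, I i)) = (h : ℕ∞))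
    (k0 : ℕ) (k : Fin s → ℕ)
    (hsum : k0 + ∑ i, k i = d - 1) (hlt : ∑ i, k i < h)
    (x : Fin d → A) (c : Fin d → Fin (s + 1))
    (hjr : IsJointReduction A M (Fin.snoc I J) x c (Fin.snoc k (k0 + 1)))
    (hsop : IsSOP A M x) :
    ∀ e₁ e₂ : ℕ, IsMixedMult A M J I k0 k e₁ →
      IsHSMult A M (Ideal.span (Set.range x)) d e₂ → e₁ = e₂ := by
  intro e₁ e₂ he₁ he₂
  have hI : ∏ i, I i ≤ J.radical :=
    hJ ▸ le_maximalIdeal_of_idealHeight_map_ne_top (hht.trans_ne (ENat.natCast_ne_top h))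
  exact mixedMult_eq_multiplicity_of_jointReduction_general hI hdim
    (hht ▸ Nat.cast_lt.2 hlt) hjr he₁ he₂
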